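/- arXiv:2008.09565 — 2 statements merged into one kernel-verified Lean document; each statement's English description precedes it below -/
import Mathlib

section
/- Let M_1,…,M_r be monomials in K[x_1,…,x_n] and I_i the principal L_{E_i}-Borel ideal generated by M_i, where E_i is the set of essential variables of I_i and every variable dividing M_i lies in E_i. Assume the ordering I_1,…,I_r is L-free. Let φ : K[x_1,…,x_n, T_{m,i} : m ∈ G_i, 1 ≤ i ≤ r] → K[x_1,…,x_n,t_1,…,t_r] be the presentation of the multi-Rees algebra (φ(x_j) = x_j, φ(T_{m,i}) = m·t_i, G_i = L_{E_i}-Borel(M_i)), and order K[x,T] by the lexicographic monomial order in which T_{m,i} ≻ T_{n,j} iff i < j, or i = j and m ≻ n in graded reverse lexicographic order on K[x] (with x_1 ≻ ⋯ ≻ x_n), every T-variable exceeds every x-variable, and x_1 ≻ ⋯ ≻ x_n. Then the quadrics of symmetric and fiber type form a Gröbner basis of ker(φ) with respect to this order: for every nonzero f ∈ ker(φ), the leading monomial of f is divisible by the leading monomial of one of these quadrics. -/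
/-- An `L_U`-Borel move: replace one factor `x_j` of `m` by `x_i`, where
`x_i, x_j ∈ U` and `i < j`. -/
def LBorelStep (n : ℕ) (U : Set (Fin n)) (m m' : Fin n →₀ ℕ) : Prop :=
  ∃ i j : Fin n, i ∈ U ∧ j ∈ U ∧ i < j ∧ 0 < m j ∧
    m' + Finsupp.single j 1 = m + Finsupp.single i 1

/-- `L_U`-Borel(M): all monomials obtainable from `M` by `L_U`-Borel moves
(including `M` itself); this is the minimal generating set of the principal
`L_U`-Borel ideal generated by `M`. -/
def LBorelSet (n : ℕ) (U : Set (Fin n)) (M : Fin n →₀ ℕ) : Set (Fin n →₀ ℕ) :=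
  {m | Relation.ReflTransGen (LBorelStep n U) M m}

/-- The variables `T_{g,i}`, one for each minimal generator `g` of the principal
`L_{E_i}`-Borel ideal generated by `M_i`. -/
def TVar (n r : ℕ) (E : Fin r → Set (Fin n)) (M : Fin r → (Fin n →₀ ℕ)) : Type :=
  Σ i : Fin r, {g : Fin n →₀ ℕ // g ∈ LBorelSet n (E i) (M i)}

/-- The quadrics of symmetric type: `x_s·T_{g,i} − x_u·T_{(x_s/x_u)g, i}` with
`g ∈ G_i`, `x_u ∣ g`, `x_s, x_u ∈ E_i`, `s < u`. -/
def symQuadrics (K : Type*) [Field K] (n r : ℕ) (E : Fin r → Set (Fin n))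
    (M : Fin r → (Fin n →₀ ℕ)) : Set (MvPolynomial (Fin n ⊕ TVar n r E M) K) :=
  {b | ∃ (i : Fin r) (g g' : {g : Fin n →₀ ℕ // g ∈ LBorelSet n (E i) (M i)})
      (s u : Fin n),
    s < u ∧ s ∈ E i ∧ u ∈ E i ∧ 0 < g.1 u ∧
    g'.1 + Finsupp.single u 1 = g.1 + Finsupp.single s 1 ∧
    b = MvPolynomial.X (Sum.inl s) * MvPolynomial.X (Sum.inr ⟨i, g⟩) -
        MvPolynomial.X (Sum.inl u) * MvPolynomial.X (Sum.inr ⟨i, g'⟩)}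

/-- The quadrics of principal fiber type:
`T_{g,i}·T_{h,i} − T_{(x_s/x_u)g, i}·T_{(x_u/x_s)h, i}` with `g, h ∈ G_i`, `s < u`,
`x_u ∣ g`, `x_s ∣ h`, `x_s, x_u ∈ E_i`, and `(x_s/x_u)g, (x_u/x_s)h ∈ G_i`. -/
def prinQuadrics (K : Type*) [Field K] (n r : ℕ) (E : Fin r → Set (Fin n))
    (M : Fin r → (Fin n →₀ ℕ)) : Set (MvPolynomial (Fin n ⊕ TVar n r E M) K) :=
  {b | ∃ (i : Fin r) (g h g' h' : {g : Fin n →₀ ℕ // g ∈ LBorelSet n (E i) (M i)})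
      (s u : Fin n),
    s < u ∧ s ∈ E i ∧ u ∈ E i ∧ 0 < g.1 u ∧ 0 < h.1 s ∧
    g'.1 + Finsupp.single u 1 = g.1 + Finsupp.single s 1 ∧
    h'.1 + Finsupp.single s 1 = h.1 + Finsupp.single u 1 ∧
    b = MvPolynomial.X (Sum.inr ⟨i, g⟩) * MvPolynomial.X (Sum.inr ⟨i, h⟩) -
        MvPolynomial.X (Sum.inr ⟨i, g'⟩) * MvPolynomial.X (Sum.inr ⟨i, h'⟩)}

/-- The quadrics of bi-principal fiber type:
`T_{g,i}·T_{h,j} − T_{(x_u/x_s)g, i}·T_{(x_s/x_u)h, j}` with `i < j`, `g ∈ G_i`,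
`h ∈ G_j`, `s < u`, `x_s ∣ g`, `x_u ∣ h`, `x_s, x_u ∈ E_i ∩ E_j`, and
`(x_u/x_s)g ∈ G_i`, `(x_s/x_u)h ∈ G_j`. -/
def biQuadrics (K : Type*) [Field K] (n r : ℕ) (E : Fin r → Set (Fin n))
    (M : Fin r → (Fin n →₀ ℕ)) : Set (MvPolynomial (Fin n ⊕ TVar n r E M) K) :=
  {b | ∃ (i j : Fin r), i < j ∧
    ∃ (g g' : {g : Fin n →₀ ℕ // g ∈ LBorelSet n (E i) (M i)})
      (h h' : {g : Fin n →₀ ℕ // g ∈ LBorelSet n (E j) (M j)}) (s u : Fin n),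
    s < u ∧ s ∈ E i ∧ u ∈ E i ∧ s ∈ E j ∧ u ∈ E j ∧ 0 < g.1 s ∧ 0 < h.1 u ∧
    g'.1 + Finsupp.single s 1 = g.1 + Finsupp.single u 1 ∧
    h'.1 + Finsupp.single u 1 = h.1 + Finsupp.single s 1 ∧
    b = MvPolynomial.X (Sum.inr ⟨i, g⟩) * MvPolynomial.X (Sum.inr ⟨j, h⟩) -
        MvPolynomial.X (Sum.inr ⟨i, g'⟩) * MvPolynomial.X (Sum.inr ⟨j, h'⟩)}

/-- Graded reverse lexicographic order (`a ≺ b`) on monomials of `K[x_1,…,x_n]` with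
`x_1 ≻ ⋯ ≻ x_n`. -/
def grevlexLT (n : ℕ) (a b : Fin n →₀ ℕ) : Prop :=
  (∑ k, a k) < (∑ k, b k) ∨
    ((∑ k, a k) = (∑ k, b k) ∧ ∃ j : Fin n, b j < a j ∧ ∀ i : Fin n, j < i → a i = b i)

/-- The ordering of the variables of `K[x,T]` (here `a < b` means "`a` is a smaller
variable than `b`"): every `T`-variable exceeds every `x`-variable,
`T_{g,i} ≻ T_{h,j}` iff `i < j`, or `i = j` and `g ≻ h` in graded reverse
lexicographic order, and `x_1 ≻ ⋯ ≻ x_n`. -/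
def mrVarLT (n r : ℕ) (E : Fin r → Set (Fin n)) (M : Fin r → (Fin n →₀ ℕ)) :
    (Fin n ⊕ TVar n r E M) → (Fin n ⊕ TVar n r E M) → Prop
  | Sum.inl s, Sum.inl u => u < s
  | Sum.inl _, Sum.inr _ => True
  | Sum.inr _, Sum.inl _ => False
  | Sum.inr a, Sum.inr b => b.1 < a.1 ∨ (a.1 = b.1 ∧ grevlexLT n a.2.1 b.2.1)

/-- The induced lexicographic order (`γ ≺ γ'`) on the monomials of `K[x,T]`: at the
greatest variable where `γ` and `γ'` differ, `γ` has the smaller exponent. -/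
def mrLexLT (n r : ℕ) (E : Fin r → Set (Fin n)) (M : Fin r → (Fin n →₀ ℕ))
    (γ γ' : (Fin n ⊕ TVar n r E M) →₀ ℕ) : Prop :=
  ∃ v, γ v < γ' v ∧ ∀ w, mrVarLT n r E M v w → γ w = γ' w

/-!
Let `γ` be the exponent of a monomial that no leading monomial of the quadrics divides. It suffices
to recover `γ` from its image under `φ`, since then the leading monomial of an element of `ker φ`,
which shares its image with a smaller monomial, must be divisible by the leading monomial of a
quadric.

If all variables of `M` lie in `U`, the monomials in `L_U`-Borel(`M`) are those of the degree of `M`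
in the variables of `U` whose degree in `x_u, …, x_n` is, for each `u`, at most that of `M`. The
image of `γ` shows how many generators of each ideal `γ` contains. Going through the ideals in order
and, for each, through the variables from `x_n` down, it also shows the exponent of each variable
`x_j` in the product of these generators: if `γ` contains `x_j` or a generator of a later ideal
divisible by `x_j`, the quadrics of symmetric and bi-principal type (with `L`-freeness, for the
latter) force the generators to have the maximal degree in `x_j, …, x_n`, so that this exponent is
as large as it can be. Finally, the quadrics of principal type force the generators, sorted
colexicographically, to be distributed so evenly that their number and their product determine them.
-/

namespace MultiRees

open Finset MvPolynomial

open scoped MonomialOrder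

section Toric

variable {σ τ R : Type*}

/-- An exponent vector `γ` is reducible modulo `B` when the leading monomial of some nonzero
element of `B` divides the monomial with exponent `γ`; the others are the exponents of the
standard monomials of `B`. -/
def IsReducible [CommSemiring R] (m : MonomialOrder σ) (B : Set (MvPolynomial σ R))
    (γ : σ →₀ ℕ) : Prop :=
  ∃ b ∈ B, b ≠ 0 ∧ m.degree b ≤ γ

lemma isReducible_of_sub_mem [CommRing R] {m : MonomialOrder σ} {B : Set (MvPolynomial σ R)}
    {p q : MvPolynomial σ R} {γ : σ →₀ ℕ} (hB : p - q ∈ B ∨ q - p ∈ B)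
    (hlt : m.degree q ≺[m] m.degree p) (hle : m.degree p ≤ γ) : IsReducible m B γ := by
  have hne : p ≠ q := by
    rintro rfl
    exact hlt.false
  have hdeg : m.degree (p - q) = m.degree p := m.degree_sub_of_lt hlt
  rcases hB with hB | hB
  · exact ⟨p - q, hB, sub_ne_zero.2 hne, hdeg.trans_le hle⟩
  · refine ⟨q - p, hB, sub_ne_zero.2 hne.symm, ?_⟩
    rwa [← neg_sub, m.degree_neg, hdeg]

variable [CommSemiring R] {w : σ → τ →₀ ℕ} {m : MonomialOrder σ} {B : Set (MvPolynomial σ R)}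

lemma aeval_monomial_one_monomial (w : σ → τ →₀ ℕ) (s : σ →₀ ℕ) (c : R) :
    aeval (fun v => monomial (w v) (1 : R)) (monomial s c) = monomial (Finsupp.weight w s) c := by
  rw [aeval_monomial, Finsupp.weight_apply, monomial_finsupp_sum_index]
  simp only [monomial_pow, one_pow, algebraMap_eq]

lemma exists_ne_weight_eq {f : MvPolynomial σ R}
    (hf : aeval (fun v => monomial (w v) (1 : R)) f = 0) {l : σ →₀ ℕ} (hl : l ∈ f.support) :
    ∃ a ∈ f.support, a ≠ l ∧ Finsupp.weight w a = Finsupp.weight w l := by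
  classical
  by_contra! hne
  have hcoeff := congrArg (coeff (Finsupp.weight w l)) hf
  rw [f.as_sum, map_sum] at hcoeff
  simp only [aeval_monomial_one_monomial, coeff_sum, coeff_monomial, coeff_zero] at hcoeff
  rw [sum_eq_single_of_mem l hl fun a ha hal => if_neg (hne a ha hal), if_pos rfl] at hcoeff
  exact mem_support_iff.1 hl hcoeff

lemma lt_degree_of_mem_support {f : MvPolynomial σ R} {a : σ →₀ ℕ} (ha : a ∈ f.support)
    (hne : a ≠ m.degree f) : a ≺[m] m.degree f :=
  (m.le_degree ha).lt_of_ne (m.toSyn.injective.ne hne)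

lemma IsReducible.exists_lt_weight_eq
    (hB : ∀ b ∈ B, aeval (fun v => monomial (w v) (1 : R)) b = 0) {γ : σ →₀ ℕ}
    (hγ : IsReducible m B γ) :
    ∃ γ', γ' ≺[m] γ ∧ Finsupp.weight w γ' = Finsupp.weight w γ := by
  obtain ⟨b, hb, hb0, hle⟩ := hγ
  obtain ⟨δ, rfl⟩ := exists_add_of_le hle
  obtain ⟨a, ha, hne, hw⟩ := exists_ne_weight_eq (hB b hb) (m.degree_mem_support hb0)
  refine ⟨a + δ, ?_, by rw [map_add, map_add, hw]⟩
  rw [map_add, map_add]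
  exact add_lt_add_left (lt_degree_of_mem_support ha hne) _

lemma exists_not_isReducible_weight_eq
    (hB : ∀ b ∈ B, aeval (fun v => monomial (w v) (1 : R)) b = 0) (γ : σ →₀ ℕ) :
    ∃ μ, ¬ IsReducible m B μ ∧ Finsupp.weight w μ = Finsupp.weight w γ ∧ μ ≼[m] γ := by
  induction γ using (InvImage.wf m.toSyn wellFounded_lt).induction with
  | _ γ ih =>
    by_cases hγ : IsReducible m B γ
    · obtain ⟨γ', hlt, hw⟩ := hγ.exists_lt_weight_eq hB
      obtain ⟨μ, hμ, hwμ, hle⟩ := ih γ' hlt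
      exact ⟨μ, hμ, hwμ.trans hw, hle.trans hlt.le⟩
    · exact ⟨γ, hγ, rfl, le_rfl⟩

/-- A second monomial of `f` with the same image as the leading one reduces to a standard
monomial strictly below the leading one, which therefore cannot be standard itself. -/
theorem isReducible_degree_of_injOn
    (hB : ∀ b ∈ B, aeval (fun v => monomial (w v) (1 : R)) b = 0)
    (hinj : Set.InjOn (Finsupp.weight w) {γ | ¬ IsReducible m B γ}) {f : MvPolynomial σ R}
    (hf : aeval (fun v => monomial (w v) (1 : R)) f = 0) (hf0 : f ≠ 0) :
    IsReducible m B (m.degree f) := by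
  by_contra hstd
  obtain ⟨a, ha, hne, hwa⟩ := exists_ne_weight_eq hf (m.degree_mem_support hf0)
  obtain ⟨μ, hμ, hwμ, hle⟩ := exists_not_isReducible_weight_eq (m := m) hB a
  have hμf : μ = m.degree f := hinj hμ hstd (hwμ.trans hwa)
  exact (hle.trans_lt (lt_degree_of_mem_support ha hne)).ne (congrArg m.toSyn hμf)

end Toric

section Borel

variable {n : ℕ} {U : Set (Fin n)} {M g g' h : Fin n →₀ ℕ} {s u j : Fin n}

/-- The degree of `x^g` in the variables `x_u, …, x_n`. -/
noncomputable def tailDeg (u : Fin n) : (Fin n →₀ ℕ) →+ ℕ := ∑ k ∈ Ici u, Finsupp.applyAddHom k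

lemma tailDeg_apply (u : Fin n) (g : Fin n →₀ ℕ) : tailDeg u g = ∑ k ∈ Ici u, g k := by
  simp only [tailDeg, AddMonoidHom.finsetSum_apply, Finsupp.applyAddHom_apply]

lemma tailDeg_single_one (u j : Fin n) :
    tailDeg u (Finsupp.single j 1) = if u ≤ j then 1 else 0 := by
  simp only [tailDeg_apply, Finsupp.single_apply, sum_ite_eq, mem_Ici]

lemma tailDeg_eq_apply_add_sum_Ioi (u : Fin n) (g : Fin n →₀ ℕ) :
    tailDeg u g = g u + ∑ k ∈ Ioi u, g k := by
  rw [tailDeg_apply, ← Ioi_insert, sum_insert notMem_Ioi_self]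

lemma tailDeg_antitone (g : Fin n →₀ ℕ) : Antitone fun u => tailDeg u g := fun u v huv => by
  simpa only [tailDeg_apply] using sum_le_sum_of_subset (Ici_subset_Ici.2 huv)

lemma tailDeg_le_degree (u : Fin n) (g : Fin n →₀ ℕ) : tailDeg u g ≤ g.degree := by
  rw [tailDeg_apply, Finsupp.degree_eq_sum]
  exact sum_le_sum_of_subset (subset_univ _)

lemma tailDeg_eq_of_forall_eq_zero (huj : u ≤ j) (h0 : ∀ k, u ≤ k → k < j → g k = 0) :
    tailDeg u g = tailDeg j g := by
  rw [tailDeg_apply, tailDeg_apply]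
  refine (sum_subset (Ici_subset_Ici.2 huj) fun k hk hkj => ?_).symm
  exact h0 k (mem_Ici.1 hk) (by simpa only [mem_Ici, not_le] using hkj)

lemma exists_pos_of_tailDeg_lt_degree (hlt : tailDeg j g < g.degree) : ∃ s < j, 0 < g s := by
  by_contra! h0
  refine hlt.not_ge ?_
  rw [tailDeg_apply, Finsupp.degree_eq_sum]
  refine (sum_subset (subset_univ _) fun k _ hk => ?_).ge
  exact Nat.le_zero.1 (h0 k (by simpa only [mem_Ici, not_le] using hk))

lemma exists_exchange (g : Fin n →₀ ℕ) (s : Fin n) (hu : 0 < g u) :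
    ∃ g', g' + Finsupp.single u 1 = g + Finsupp.single s 1 := by
  refine ⟨g - Finsupp.single u 1 + Finsupp.single s 1, ?_⟩
  rw [add_right_comm, tsub_add_cancel_of_le (Finsupp.single_le_iff.2 hu)]

lemma apply_exchange (hg : g' + Finsupp.single u 1 = g + Finsupp.single s 1) (k : Fin n) :
    (g' k + if u = k then 1 else 0) = g k + if s = k then 1 else 0 := by
  simpa only [Finsupp.add_apply, Finsupp.single_apply] using DFunLike.congr_fun hg k

lemma tailDeg_exchange (hg : g' + Finsupp.single u 1 = g + Finsupp.single s 1) (k : Fin n) :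
    (tailDeg k g' + if k ≤ u then 1 else 0) = tailDeg k g + if k ≤ s then 1 else 0 := by
  simpa only [map_add, tailDeg_single_one] using congrArg (tailDeg k) hg

lemma degree_exchange (hg : g' + Finsupp.single u 1 = g + Finsupp.single s 1) :
    g'.degree = g.degree := by
  simpa only [map_add, Finsupp.degree_single, Nat.add_right_cancel_iff] using
    congrArg Finsupp.degree hg

/-- The last index at which `g` and `h` differ is `j`, where `h` has the larger exponent. When
the degrees agree, this says that `g ≻ h` in the graded reverse lexicographic order. -/
def ColexLTAt (g h : Fin n →₀ ℕ) (j : Fin n) : Prop :=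
  g j < h j ∧ ∀ k, j < k → g k = h k

lemma toColex_lt_iff_exists_colexLTAt :
    toColex g < toColex h ↔ ∃ j, ColexLTAt g h j := by
  rw [Finsupp.Colex.lt_iff]
  exact exists_congr fun j => and_comm

lemma exists_colexLTAt_or_of_ne (hne : g ≠ h) : ∃ j, ColexLTAt g h j ∨ ColexLTAt h g j := by
  rcases lt_or_gt_of_ne (toColex.injective.ne hne) with hlt | hlt
  · exact (toColex_lt_iff_exists_colexLTAt.1 hlt).imp fun _ => Or.inl
  · exact (toColex_lt_iff_exists_colexLTAt.1 hlt).imp fun _ => Or.inr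

lemma ColexLTAt.tailDeg_lt (hgh : ColexLTAt g h j) : tailDeg j g < tailDeg j h := by
  rw [tailDeg_eq_apply_add_sum_Ioi, tailDeg_eq_apply_add_sum_Ioi,
    sum_congr rfl fun k hk => hgh.2 k (mem_Ioi.1 hk)]
  exact Nat.add_lt_add_right hgh.1 _

lemma ColexLTAt.of_exchange (hgh : ColexLTAt g h j) (hsu : s < u) (huj : u ≤ j)
    (hu : u = j → g j + 1 < h j) (hh : h' + Finsupp.single u 1 = h + Finsupp.single s 1) :
    ColexLTAt g h' j := by
  refine ⟨?_, fun k hk => ?_⟩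
  · have := apply_exchange hh j
    have := hgh.1
    grind
  · have := apply_exchange hh k
    have := hgh.2 k hk
    grind

lemma colexLTAt_of_exchange (hsu : s < u)
    (hg : g' + Finsupp.single s 1 = g + Finsupp.single u 1) : ColexLTAt g g' u := by
  refine ⟨?_, fun k hk => ?_⟩
  · have := apply_exchange hg u
    rw [if_neg hsu.ne, if_pos rfl] at this
    lia
  · have := apply_exchange hg k
    rw [if_neg (hsu.trans hk).ne, if_neg hk.ne] at this
    exact this.symm

/-- The numerical description of `L_U`-Borel(M), see `mem_LBorelSet_iff`. -/
structure IsDominated (U : Set (Fin n)) (M g : Fin n →₀ ℕ) : Prop where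
  mem_of_pos : ∀ j, 0 < g j → j ∈ U
  degree_eq : g.degree = M.degree
  tailDeg_le : ∀ u, tailDeg u g ≤ tailDeg u M

lemma mem_of_pos_of_exchange (hU : ∀ j, 0 < g j → j ∈ U) (hs : s ∈ U)
    (hg : g' + Finsupp.single u 1 = g + Finsupp.single s 1) (hj : 0 < g' j) : j ∈ U := by
  by_cases hsj : s = j
  · exact hsj ▸ hs
  · have := apply_exchange hg j
    rw [if_neg hsj] at this
    exact hU j (by lia)

lemma IsDominated.of_LBorelStep (hgM : IsDominated U M g) (hstep : LBorelStep n U g g') :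
    IsDominated U M g' := by
  obtain ⟨s, u, hs, -, hsu, -, hg⟩ := hstep
  refine ⟨fun j => mem_of_pos_of_exchange hgM.mem_of_pos hs hg,
    (degree_exchange hg).trans hgM.degree_eq, fun k => ?_⟩
  have := tailDeg_exchange hg k
  have := hgM.tailDeg_le k
  split_ifs at * <;> lia

lemma isDominated_of_mem_LBorelSet (hM : ∀ j, 0 < M j → j ∈ U) (hg : g ∈ LBorelSet n U M) :
    IsDominated U M g := by
  induction hg with
  | refl => exact ⟨hM, rfl, fun _ => le_rfl⟩
  | tail _ hstep ih => exact ih.of_LBorelStep hstep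

/-- The last nonzero exponent before `j` gives a unit to `j`: the only tail degrees this changes
are equal to the one at `j`, where there is slack. -/
lemma IsDominated.exists_reverse (hgM : IsDominated U M g) (hj : j ∈ U)
    (hlt : tailDeg j g < tailDeg j M) :
    ∃ s < j, 0 < g s ∧ ∃ g', IsDominated U M g' ∧
      g' + Finsupp.single s 1 = g + Finsupp.single j 1 := by
  have hdeg : tailDeg j g < g.degree :=
    hlt.trans_le ((tailDeg_le_degree j M).trans_eq hgM.degree_eq.symm)
  obtain ⟨s, hs, hsmax⟩ := exists_max_image {s ∈ Iio j | 0 < g s} id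
    ((exists_pos_of_tailDeg_lt_degree hdeg).imp fun s hs => by
      rwa [mem_filter, mem_Iio])
  rw [mem_filter, mem_Iio] at hs
  have hconst (k : Fin n) (hsk : s < k) (hkj : k ≤ j) : tailDeg k g = tailDeg j g := by
    refine tailDeg_eq_of_forall_eq_zero hkj fun l hkl hlj => ?_
    by_contra hl
    have hls : l ≤ s := hsmax l (mem_filter.2 ⟨mem_Iio.2 hlj, Nat.pos_of_ne_zero hl⟩)
    exact ((hsk.trans_le hkl).trans_le hls).false
  obtain ⟨g', hg⟩ := exists_exchange g j hs.2
  refine ⟨s, hs.1, hs.2, g', ⟨fun k => mem_of_pos_of_exchange hgM.mem_of_pos hj hg,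
    (degree_exchange hg).trans hgM.degree_eq, fun k => ?_⟩, hg⟩
  have hk := tailDeg_exchange hg k
  have hle := hgM.tailDeg_le k
  split_ifs at hk with hks hkj hkj
  · lia
  · exact absurd (hks.trans hs.1.le) hkj
  · have := tailDeg_antitone M hkj
    have := hconst k (not_le.1 hks) hkj
    lia
  · lia

lemma sum_tailDeg_lt_of_exchange (hsu : s < u)
    (hg : g' + Finsupp.single s 1 = g + Finsupp.single u 1) :
    ∑ k, tailDeg k g < ∑ k, tailDeg k g' := by
  refine sum_lt_sum (fun k _ => ?_) ⟨u, mem_univ u, ?_⟩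
  · have := tailDeg_exchange hg k
    split_ifs at this <;> lia
  · exact (colexLTAt_of_exchange hsu hg).tailDeg_lt

lemma IsDominated.exists_tailDeg_lt (hM : ∀ j, 0 < M j → j ∈ U) (hgM : IsDominated U M g)
    (hne : g ≠ M) : ∃ j ∈ U, tailDeg j g < tailDeg j M := by
  obtain ⟨j, hj | hj⟩ := exists_colexLTAt_or_of_ne hne
  · exact ⟨j, hM j (Nat.zero_lt_of_lt hj.1), hj.tailDeg_lt⟩
  · exact absurd (hgM.tailDeg_le j) hj.tailDeg_lt.not_ge

lemma IsDominated.mem_LBorelSet (hM : ∀ j, 0 < M j → j ∈ U) {g : Fin n →₀ ℕ}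
    (hgM : IsDominated U M g) : g ∈ LBorelSet n U M := by
  by_cases hne : g = M
  · subst hne
    exact Relation.ReflTransGen.refl
  obtain ⟨j, hj, hlt⟩ := hgM.exists_tailDeg_lt hM hne
  obtain ⟨s, hsj, hs, g', hg'M, hg⟩ := hgM.exists_reverse hj hlt
  have hstep : LBorelStep n U g' g :=
    ⟨s, j, hgM.mem_of_pos s hs, hj, hsj,
      Nat.zero_lt_of_lt (colexLTAt_of_exchange hsj hg).1, hg.symm⟩
  exact Relation.ReflTransGen.tail (hg'M.mem_LBorelSet hM) hstep
termination_by ∑ k, tailDeg k M - ∑ k, tailDeg k g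
decreasing_by
  have hinc := sum_tailDeg_lt_of_exchange hsj hg
  have hbound := sum_le_sum fun k (_ : k ∈ univ) => hg'M.tailDeg_le k
  lia

lemma mem_LBorelSet_iff (hM : ∀ j, 0 < M j → j ∈ U) :
    g ∈ LBorelSet n U M ↔ IsDominated U M g :=
  ⟨isDominated_of_mem_LBorelSet hM, fun hgM => hgM.mem_LBorelSet hM⟩

lemma mem_LBorelSet_of_exchange (hg : g ∈ LBorelSet n U M) (hsu : s < u) (hs : s ∈ U)
    (hu : u ∈ U) (hgu : 0 < g u) (hg' : g' + Finsupp.single u 1 = g + Finsupp.single s 1) :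
    g' ∈ LBorelSet n U M :=
  Relation.ReflTransGen.tail hg ⟨s, u, hs, hu, hsu, hgu, hg'⟩

lemma degree_eq_of_mem_LBorelSet (hg : g ∈ LBorelSet n U M) : g.degree = M.degree := by
  induction hg with
  | refl => rfl
  | tail _ hstep ih =>
    obtain ⟨s, u, -, -, -, -, hg'⟩ := hstep
    exact (degree_exchange hg').trans ih

lemma finite_LBorelSet (U : Set (Fin n)) (M : Fin n →₀ ℕ) : (LBorelSet n U M).Finite :=
  (Finsupp.finite_of_degree_le M.degree).subset fun _ hg => (degree_eq_of_mem_LBorelSet hg).le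

end Borel

section Tight

variable {n : ℕ} {c : Fin n → ℕ} {S S' : Set (Fin n →₀ ℕ)} {g g' h h' : Fin n →₀ ℕ} {k : Fin n}

/-- The conditions that irreducibility with respect to the quadrics imposes on the set of
generators `g` for which `T_{g,i}` occurs in a fixed monomial; there `c` is the sequence of tail
degrees of `M_i`. -/
structure IsTight (c : Fin n → ℕ) (S : Set (Fin n →₀ ℕ)) : Prop where
  tailDeg_le : ∀ g ∈ S, ∀ u, tailDeg u g ≤ c u
  apply_le : ∀ g ∈ S, ∀ h ∈ S, ∀ j, ColexLTAt g h j → h j ≤ g j + 1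
  le_tailDeg : ∀ g ∈ S, ∀ h ∈ S, ∀ j, ColexLTAt g h j → ∀ u < j, 0 < h u → c u ≤ tailDeg u g

lemma apply_le_of_toColex_le (hgh : toColex g ≤ toColex h) (hk : ∀ l, k < l → g l = h l) :
    g k ≤ h k := by
  by_contra! hlt
  exact hgh.not_gt (toColex_lt_iff_exists_colexLTAt.2 ⟨k, hlt, fun l hl => (hk l hl).symm⟩)

lemma IsTight.apply_le_apply (hS : IsTight c S) (hg : g ∈ S) (hh : h ∈ S)
    (hgh : toColex g ≤ toColex h) (hgh' : toColex g' ≤ toColex h') (hg' : tailDeg k g' ≤ c k)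
    (hgg' : ColexLTAt g g' k) (hhh' : ∀ l, k < l → h l = h' l) : h k ≤ h' k := by
  have hk (hl : ∀ l, k < l → g l = h l) : g' k ≤ h' k :=
    apply_le_of_toColex_le hgh' fun l hkl => by rw [← hgg'.2 l hkl, hl l hkl, hhh' l hkl]
  have hgk := hgg'.1
  rcases hgh.eq_or_lt with heq | hlt
  · obtain rfl := toColex.injective heq
    exact hgk.le.trans (hk fun _ _ => rfl)
  obtain ⟨j, hj⟩ := toColex_lt_iff_exists_colexLTAt.1 hlt
  rcases lt_trichotomy j k with hjk | rfl | hkj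
  · rw [← hj.2 k hjk]
    exact hgk.le.trans (hk fun l hkl => hj.2 l (hjk.trans hkl))
  · exact ((hS.apply_le g hg h hh j hj).trans hgk).trans (hk hj.2)
  · by_contra! hlt
    have := hS.le_tailDeg g hg h hh j hj k hkj (Nat.zero_lt_of_lt hlt)
    have := hgg'.tailDeg_lt
    lia

variable {ι : Type*} [Fintype ι] [LinearOrder ι] {f f' : ι → Fin n →₀ ℕ}

lemma IsTight.sum_apply_lt_sum_apply (hS : IsTight c S) (hf : ∀ p, f p ∈ S)
    (hmono : Monotone (toColex ∘ f)) (hmono' : Monotone (toColex ∘ f'))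
    (hf' : ∀ p, tailDeg k (f' p) ≤ c k) (hcol : ∀ l, k < l → ∀ p, f p l = f' p l) {p : ι}
    (hp : ∀ q < p, f q k = f' q k) (hlt : f p k < f' p k) :
    ∑ p, f p k < ∑ p, f' p k := by
  refine sum_lt_sum (fun q _ => ?_) ⟨p, mem_univ p, hlt⟩
  rcases lt_or_ge q p with hqp | hpq
  · exact (hp q hqp).le
  · exact hS.apply_le_apply (hf p) (hf q) (hmono hpq) (hmono' hpq) (hf' p)
      ⟨hlt, fun l hl => hcol l hl p⟩ fun l hl => hcol l hl q

/-- The columns of the two families are compared from the last one to the first, and each column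
from the first entry on: at the first disagreement all later entries differ in the same
direction, so that the column sums are different. -/
lemma IsTight.eq_of_monotone_of_sum_eq (hS : IsTight c S) (hS' : IsTight c S')
    (hf : ∀ p, f p ∈ S) (hf' : ∀ p, f' p ∈ S')
    (hmono : Monotone (toColex ∘ f)) (hmono' : Monotone (toColex ∘ f'))
    (hsum : ∑ p, f p = ∑ p, f' p) : f = f' := by
  suffices hcol : ∀ k p, f p k = f' p k from funext fun p => Finsupp.ext fun k => hcol k p
  intro k
  induction k using WellFoundedGT.induction with
  | _ k ihk =>
    intro p
    induction p using WellFoundedLT.induction with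
    | _ p ihp =>
      have hsumk : ∑ p, f p k = ∑ p, f' p k := by
        simpa only [Finsupp.finsetSum_apply] using DFunLike.congr_fun hsum k
      rcases lt_trichotomy (f p k) (f' p k) with hlt | heq | hgt
      · exact absurd hsumk (hS.sum_apply_lt_sum_apply hf hmono hmono'
          (fun q => hS'.tailDeg_le _ (hf' q) k) ihk ihp hlt).ne
      · exact heq
      · exact absurd hsumk (hS'.sum_apply_lt_sum_apply hf' hmono' hmono
          (fun q => hS.tailDeg_le _ (hf q) k) (fun l hl q => (ihk l hl q).symm)
          (fun q hq => (ihp q hq).symm) hgt).ne'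

lemma exists_monotone_map_univ_eq {α β : Type*} [LinearOrder β] (key : α → β) {s : Multiset α}
    {d : ℕ} (hs : s.card = d) :
    ∃ f : Fin d → α, Monotone (key ∘ f) ∧ univ.val.map f = s := by
  subst hs
  obtain ⟨l, rfl⟩ := Quot.exists_rep s
  refine ⟨l.get ∘ Tuple.sort (key ∘ l.get), Tuple.monotone_sort (key ∘ l.get), ?_⟩
  rw [Fin.univ_val_map]
  exact Quot.sound (((Tuple.sort (key ∘ l.get)).ofFn_comp_perm l.get).trans (by rw [List.ofFn_get]))

theorem IsTight.eq_of_card_eq_of_sum_eq {s s' : Multiset (Fin n →₀ ℕ)}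
    (hs : IsTight c {g | g ∈ s}) (hs' : IsTight c {g | g ∈ s'}) (hcard : s.card = s'.card)
    (hsum : s.sum = s'.sum) : s = s' := by
  generalize hd : s'.card = d at hcard
  obtain ⟨f, hmono, rfl⟩ := exists_monotone_map_univ_eq toColex hcard
  obtain ⟨f', hmono', rfl⟩ := exists_monotone_map_univ_eq toColex hd
  have hf (p : Fin d) : f p ∈ univ.val.map f := Multiset.mem_map_of_mem f (mem_univ p)
  have hf' (p : Fin d) : f' p ∈ univ.val.map f' := Multiset.mem_map_of_mem f' (mem_univ p)
  rw [hs.eq_of_monotone_of_sum_eq hs' hf hf' hmono hmono' hsum]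

end Tight

section Order

variable {n r : ℕ} {E : Fin r → Set (Fin n)} {M : Fin r → Fin n →₀ ℕ}

/-- The minimal generators of the `i`-th ideal, which index the variables `T_{g,i}`. -/
abbrev Gen (E : Fin r → Set (Fin n)) (M : Fin r → Fin n →₀ ℕ) (i : Fin r) : Type :=
  {g // g ∈ LBorelSet n (E i) (M i)}

noncomputable instance (i : Fin r) : Fintype (Gen E M i) :=
  (finite_LBorelSet (E i) (M i)).fintype

noncomputable instance : Fintype (TVar n r E M) := inferInstanceAs (Fintype (Σ i, Gen E M i))

/-- The variable `T_{g,i}`. -/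
def genVar (i : Fin r) (g : Gen E M i) : Fin n ⊕ TVar n r E M := .inr ⟨i, g⟩

/-- Encodes the order of the variables: a smaller key means a greater variable. -/
def varKey : Fin n ⊕ TVar n r E M → (Fin r ×ₗ Colex (Fin n →₀ ℕ)) ⊕ₗ Fin n
  | .inl s => toLex (.inr s)
  | .inr T => toLex (.inl (toLex (T.1, toColex T.2.1)))

lemma varKey_injective : Function.Injective (varKey (E := E) (M := M)) := by
  rintro (s | ⟨i, g, hg⟩) (u | ⟨j, h, hh⟩) heq <;>
    simp only [varKey, EmbeddingLike.apply_eq_iff_eq, Sum.inl.injEq, Sum.inr.injEq, Prod.mk.injEq,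
      reduceCtorEq] at heq
  · rw [heq]
  · obtain ⟨rfl, rfl⟩ := heq
    rfl

lemma grevlexLT_iff_toColex_lt {g h : Fin n →₀ ℕ} (hdeg : g.degree = h.degree) :
    grevlexLT n g h ↔ toColex h < toColex g := by
  simp only [grevlexLT, ← Finsupp.degree_eq_sum, hdeg, lt_self_iff_false, true_and, false_or,
    toColex_lt_iff_exists_colexLTAt, ColexLTAt, @eq_comm ℕ (g _)]

lemma mrVarLT_iff_varKey_lt (v w : Fin n ⊕ TVar n r E M) :
    mrVarLT n r E M v w ↔ varKey w < varKey v := by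
  rcases v with s | ⟨i, g⟩ <;> rcases w with u | ⟨j, h⟩
  · simp only [mrVarLT, varKey, Sum.Lex.inr_lt_inr_iff]
  · simp only [mrVarLT, varKey, Sum.Lex.inl_lt_inr]
  · simp only [mrVarLT, varKey, Sum.Lex.not_inr_lt_inl]
  · simp only [mrVarLT, varKey, Sum.Lex.inl_lt_inl_iff, Prod.Lex.toLex_lt_toLex,
      @eq_comm (Fin r) j]
    refine or_congr Iff.rfl (and_congr_right ?_)
    rintro rfl
    exact grevlexLT_iff_toColex_lt
      ((degree_eq_of_mem_LBorelSet g.2).trans (degree_eq_of_mem_LBorelSet h.2).symm)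

/-- The lexicographic order `mrLexLT` on the monomials of `K[x,T]`. -/
noncomputable def mrOrder (E : Fin r → Set (Fin n)) (M : Fin r → Fin n →₀ ℕ) :
    MonomialOrder (Fin n ⊕ TVar n r E M) :=
  letI := LinearOrder.lift' varKey (varKey_injective (E := E) (M := M))
  MonomialOrder.lex

lemma mrOrder_lt_iff {γ γ' : Fin n ⊕ TVar n r E M →₀ ℕ} :
    γ ≺[mrOrder E M] γ' ↔ mrLexLT n r E M γ γ' := by
  let := LinearOrder.lift' varKey (varKey_injective (E := E) (M := M))
  refine MonomialOrder.lex_lt_iff.trans (Finsupp.Lex.lt_iff.trans ?_)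
  simp only [mrLexLT, mrVarLT_iff_varKey_lt]
  exact exists_congr fun v => and_comm

lemma mrLexLT_degree_of_mem_support {R : Type*} [CommSemiring R]
    {f : MvPolynomial (Fin n ⊕ TVar n r E M) R} {a : Fin n ⊕ TVar n r E M →₀ ℕ}
    (ha : a ∈ f.support) (hne : a ≠ (mrOrder E M).degree f) :
    mrLexLT n r E M a ((mrOrder E M).degree f) :=
  mrOrder_lt_iff.1 (lt_degree_of_mem_support ha hne)

lemma mrVarLT_irrefl (v : Fin n ⊕ TVar n r E M) : ¬ mrVarLT n r E M v v := by
  simp only [mrVarLT_iff_varKey_lt, lt_self_iff_false, not_false_eq_true]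

lemma mrVarLT_trans {v w x : Fin n ⊕ TVar n r E M} (hvw : mrVarLT n r E M v w)
    (hwx : mrVarLT n r E M w x) : mrVarLT n r E M v x := by
  rw [mrVarLT_iff_varKey_lt] at *
  exact hwx.trans hvw

lemma mrVarLT_of_colexLTAt {i : Fin r} {g h : Gen E M i} {j : Fin n}
    (hgh : ColexLTAt g.1 h.1 j) : mrVarLT n r E M (genVar i h) (genVar i g) := by
  refine Or.inr ⟨rfl, (grevlexLT_iff_toColex_lt ?_).2 (toColex_lt_iff_exists_colexLTAt.2 ⟨j, hgh⟩)⟩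
  exact (degree_eq_of_mem_LBorelSet h.2).trans (degree_eq_of_mem_LBorelSet g.2).symm

lemma single_add_single_lt {v a b c : Fin n ⊕ TVar n r E M} (ha : mrVarLT n r E M a v)
    (hb : mrVarLT n r E M b v) (hc : mrVarLT n r E M c v) :
    Finsupp.single b 1 + Finsupp.single c 1 ≺[mrOrder E M]
      Finsupp.single v 1 + Finsupp.single a 1 := by
  classical
  have hne {x y : Fin n ⊕ TVar n r E M} (hxy : mrVarLT n r E M x y) : x ≠ y := by
    rintro rfl
    exact mrVarLT_irrefl x hxy
  refine mrOrder_lt_iff.2 ⟨v, ?_, fun w hw => ?_⟩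
  · simp only [Finsupp.add_apply, Finsupp.single_apply, if_pos, if_neg (hne hb), if_neg (hne hc)]
    lia
  · simp only [Finsupp.add_apply, Finsupp.single_apply, if_neg (hne hw),
      if_neg (hne (mrVarLT_trans ha hw)), if_neg (hne (mrVarLT_trans hb hw)),
      if_neg (hne (mrVarLT_trans hc hw))]

end Order

section Weight

variable {n r : ℕ} {E : Fin r → Set (Fin n)} {M : Fin r → Fin n →₀ ℕ}

/-- The exponent vector of the monomial `φ(v)`: `x_j ↦ x_j` and `T_{g,i} ↦ x^g t_i`. -/
noncomputable def genWeight : Fin n ⊕ TVar n r E M → Fin n ⊕ Fin r →₀ ℕ :=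
  Sum.elim (fun j => Finsupp.single (.inl j) 1)
    fun T => Finsupp.mapDomain .inl T.2.1 + Finsupp.single (.inr T.1) 1

lemma genWeight_inl (j : Fin n) :
    genWeight (E := E) (M := M) (.inl j) = Finsupp.single (.inl j) 1 :=
  rfl

lemma genWeight_genVar (i : Fin r) (g : Gen E M i) :
    genWeight (genVar i g) = Finsupp.mapDomain .inl g.1 + Finsupp.single (.inr i) 1 :=
  rfl

lemma genWeight_exchange {i : Fin r} {g g' : Gen E M i} {s u : Fin n}
    (hg : g'.1 + Finsupp.single u 1 = g.1 + Finsupp.single s 1) :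
    genWeight (genVar i g') + Finsupp.single (.inl u) 1 =
      genWeight (genVar i g) + Finsupp.single (.inl s) 1 := by
  have hmap := congrArg (Finsupp.mapDomain (Sum.inl : Fin n → Fin n ⊕ Fin r)) hg
  rw [Finsupp.mapDomain_add, Finsupp.mapDomain_add, Finsupp.mapDomain_single,
    Finsupp.mapDomain_single] at hmap
  rw [genWeight_genVar, genWeight_genVar, add_right_comm, hmap, add_right_comm]

/-- The multiset of the generators `g` of the `i`-th ideal for which `T_{g,i}` divides the
monomial with exponent `γ`, counted with their exponents. -/
noncomputable def gens (i : Fin r) (γ : Fin n ⊕ TVar n r E M →₀ ℕ) : Multiset (Fin n →₀ ℕ) :=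
  ∑ g : Gen E M i, Multiset.replicate (γ (genVar i g)) g.1

lemma exists_pos_of_mem_gens {γ : Fin n ⊕ TVar n r E M →₀ ℕ} {i : Fin r} {g : Fin n →₀ ℕ}
    (hg : g ∈ gens i γ) : ∃ g' : Gen E M i, g'.1 = g ∧ 0 < γ (genVar i g') := by
  obtain ⟨g', -, hg'⟩ := Multiset.mem_sum.1 hg
  obtain ⟨hγ, rfl⟩ := Multiset.mem_replicate.1 hg'
  exact ⟨g', rfl, Nat.pos_of_ne_zero hγ⟩

lemma count_gens [DecidableEq (Fin n →₀ ℕ)] (γ : Fin n ⊕ TVar n r E M →₀ ℕ) {i : Fin r}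
    (g : Gen E M i) : (gens i γ).count g.1 = γ (genVar i g) := by
  classical
  simp only [gens, Multiset.count_sum', Multiset.count_replicate, Subtype.val_inj,
    sum_ite_eq', mem_univ, if_true]

lemma card_gens (i : Fin r) (γ : Fin n ⊕ TVar n r E M →₀ ℕ) :
    (gens i γ).card = ∑ g : Gen E M i, γ (genVar i g) := by
  simp only [gens, Multiset.card_sum, Multiset.card_replicate]

lemma sum_gens (i : Fin r) (γ : Fin n ⊕ TVar n r E M →₀ ℕ) :
    (gens i γ).sum = ∑ g : Gen E M i, γ (genVar i g) • g.1 := by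
  simp only [gens, Multiset.sum_sum, Multiset.sum_replicate]

lemma weight_genWeight (γ : Fin n ⊕ TVar n r E M →₀ ℕ) :
    Finsupp.weight genWeight γ = (∑ s, Finsupp.single (.inl s) (γ (.inl s))) +
      ∑ i, (Finsupp.mapDomain .inl (gens i γ).sum + Finsupp.single (.inr i) (gens i γ).card) := by
  rw [Finsupp.weight_apply, Finsupp.sum_fintype _ _ (by simp), Fintype.sum_sum_type]
  refine congrArg₂ _ (sum_congr rfl fun s _ => ?_) ?_
  · rw [genWeight_inl, Finsupp.smul_single_one]
  · refine (Fintype.sum_sigma (α := Gen E M) _).trans (sum_congr rfl fun i _ => ?_)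
    change ∑ g, γ (genVar i g) • genWeight (genVar i g) = _
    simp only [genWeight_genVar, smul_add, Finsupp.smul_single_one, sum_add_distrib, sum_gens,
      card_gens, Finsupp.mapDomain_finsetSum, Finsupp.mapDomain_smul, Finsupp.single_finsetSum]

lemma mapDomain_inl_apply_inr (g : Fin n →₀ ℕ) (i : Fin r) :
    Finsupp.mapDomain (Sum.inl : Fin n → Fin n ⊕ Fin r) g (.inr i) = 0 := by
  refine Finsupp.mapDomain_of_notMem_range _ _ ?_
  rintro ⟨_, h⟩
  cases h

lemma weight_genWeight_inr (γ : Fin n ⊕ TVar n r E M →₀ ℕ) (i : Fin r) :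
    Finsupp.weight genWeight γ (.inr i) = (gens i γ).card := by
  classical
  simp only [weight_genWeight, Finsupp.add_apply, Finsupp.finsetSum_apply, mapDomain_inl_apply_inr,
    Finsupp.single_apply, reduceCtorEq, if_false, sum_const_zero, Sum.inr.injEq, sum_ite_eq',
    mem_univ, if_true, zero_add]

lemma weight_genWeight_inl (γ : Fin n ⊕ TVar n r E M →₀ ℕ) (k : Fin n) :
    Finsupp.weight genWeight γ (.inl k) = γ (.inl k) + ∑ i, (gens i γ).sum k := by
  classical
  simp only [weight_genWeight, Finsupp.add_apply, Finsupp.finsetSum_apply,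
    Finsupp.mapDomain_apply Sum.inl_injective, Finsupp.single_apply, reduceCtorEq, if_false,
    Sum.inl.injEq, sum_ite_eq', mem_univ, if_true, add_zero]

lemma eq_of_gens_eq {γ γ' : Fin n ⊕ TVar n r E M →₀ ℕ} (hgens : ∀ i, gens i γ = gens i γ')
    (hw : Finsupp.weight genWeight γ = Finsupp.weight genWeight γ') : γ = γ' := by
  classical
  refine Finsupp.ext fun v => ?_
  rcases v with k | ⟨i, g⟩
  · have hwk := DFunLike.congr_fun hw (.inl k)
    simpa only [weight_genWeight_inl, hgens, Nat.add_right_cancel_iff] using hwk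
  · exact (count_gens γ g).symm.trans ((congrArg _ (hgens i)).trans (count_gens γ' g))

end Weight

section Quadrics

variable {n r : ℕ} {E : Fin r → Set (Fin n)} {M : Fin r → Fin n →₀ ℕ}

lemma aeval_mul_X_sub_mul_X {σ τ R : Type*} [CommRing R] {w : σ → τ →₀ ℕ} {v a b c : σ}
    (hw : w v + w a = w b + w c) :
    aeval (fun v => monomial (w v) (1 : R)) (X v * X a - X b * X c : MvPolynomial σ R) = 0 := by
  simp only [map_sub, map_mul, aeval_X, monomial_mul, hw, sub_self]

variable (K : Type*) [Field K]

/-- The quadrics of symmetric and of fiber type. -/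
def quadrics (E : Fin r → Set (Fin n)) (M : Fin r → Fin n →₀ ℕ) :
    Set (MvPolynomial (Fin n ⊕ TVar n r E M) K) :=
  symQuadrics K n r E M ∪ prinQuadrics K n r E M ∪ biQuadrics K n r E M

variable {K}

lemma add_eq_add_of_exchange {N : Type*} [AddCommMonoid N] [IsCancelAdd N] {a a' b b' s u : N}
    (ha : a' + u = a + s) (hb : b' + s = b + u) : a + b = a' + b' := by
  refine add_right_cancel (b := s + u) ?_
  rw [add_add_add_comm, ← ha, ← hb, add_add_add_comm, add_comm u s]

lemma aeval_eq_zero_of_mem_quadrics {b : MvPolynomial (Fin n ⊕ TVar n r E M) K}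
    (hb : b ∈ quadrics K E M) : aeval (fun v => monomial (genWeight v) (1 : K)) b = 0 := by
  rcases hb with (⟨i, g, g', s, u, -, -, -, -, hg, rfl⟩ |
    ⟨i, g, h, g', h', s, u, -, -, -, -, -, hg, hh, rfl⟩) |
    ⟨i, j, -, g, g', h, h', s, u, -, -, -, -, -, -, -, hg, hh, rfl⟩
  · refine aeval_mul_X_sub_mul_X ?_
    have := genWeight_exchange hg
    rw [add_comm, ← genWeight_inl, ← genWeight_inl] at this
    exact (add_comm _ _).trans this.symm
  · exact aeval_mul_X_sub_mul_X
      (add_eq_add_of_exchange (genWeight_exchange hg) (genWeight_exchange hh))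
  · exact aeval_mul_X_sub_mul_X
      (add_eq_add_of_exchange (genWeight_exchange hg) (genWeight_exchange hh))

end Quadrics

section StandardMonomials

variable {K : Type*} [Field K] {n r : ℕ} {E : Fin r → Set (Fin n)} {M : Fin r → Fin n →₀ ℕ}
  {γ γ' : Fin n ⊕ TVar n r E M →₀ ℕ} {i : Fin r} {s u j : Fin n}

lemma exists_gen_exchange (g : Gen E M i) (hsu : s < u) (hs : s ∈ E i) (hu : u ∈ E i)
    (hgu : 0 < g.1 u) :
    ∃ g' : Gen E M i, g'.1 + Finsupp.single u 1 = g.1 + Finsupp.single s 1 := by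
  obtain ⟨g', hg'⟩ := exists_exchange g.1 s hgu
  exact ⟨⟨g', mem_LBorelSet_of_exchange g.2 hsu hs hu hgu hg'⟩, hg'⟩

lemma exists_gen_reverse (hM : ∀ j, 0 < M i j → j ∈ E i) (g : Gen E M i) (hj : j ∈ E i)
    (hlt : tailDeg j g.1 < tailDeg j (M i)) :
    ∃ s < j, s ∈ E i ∧ 0 < g.1 s ∧
      ∃ g' : Gen E M i, g'.1 + Finsupp.single s 1 = g.1 + Finsupp.single j 1 := by
  have hgM := (mem_LBorelSet_iff hM).1 g.2
  obtain ⟨s, hsj, hgs, g', hg'M, hg'⟩ := hgM.exists_reverse hj hlt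
  exact ⟨s, hsj, hgM.mem_of_pos s hgs, hgs, ⟨g', (mem_LBorelSet_iff hM).2 hg'M⟩, hg'⟩

lemma isReducible_of_mrVarLT {v a b c : Fin n ⊕ TVar n r E M}
    (hB : (X v * X a - X b * X c : MvPolynomial _ K) ∈ quadrics K E M ∨
      (X b * X c - X v * X a : MvPolynomial _ K) ∈ quadrics K E M)
    (ha : mrVarLT n r E M a v) (hb : mrVarLT n r E M b v) (hc : mrVarLT n r E M c v)
    (hγv : 0 < γ v) (hγa : 0 < γ a) : IsReducible (mrOrder E M) (quadrics K E M) γ := by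
  classical
  have hdeg (x y : Fin n ⊕ TVar n r E M) : (mrOrder E M).degree (X x * X y : MvPolynomial _ K) =
      Finsupp.single x 1 + Finsupp.single y 1 := by
    rw [MonomialOrder.degree_mul (X_ne_zero x) (X_ne_zero y), MonomialOrder.degree_X,
      MonomialOrder.degree_X]
  have hva : v ≠ a := by
    rintro rfl
    exact mrVarLT_irrefl v ha
  refine isReducible_of_sub_mem hB ?_ ?_
  · rw [hdeg, hdeg]
    exact single_add_single_lt ha hb hc
  · rw [hdeg]
    intro x
    rw [Finsupp.add_apply, Finsupp.single_apply, Finsupp.single_apply]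
    grind

lemma isReducible_of_tailDeg_lt_of_colexLTAt (hM : ∀ j, 0 < M i j → j ∈ E i) {g h : Gen E M i}
    (hγg : 0 < γ (genVar i g)) (hγh : 0 < γ (genVar i h)) (hgh : ColexLTAt g.1 h.1 j)
    (huj : u ≤ j) (hhu : 0 < h.1 u) (hu : u = j → g.1 j + 1 < h.1 j)
    (hlt : tailDeg u g.1 < tailDeg u (M i)) :
    IsReducible (mrOrder E M) (quadrics K E M) γ := by
  have huE : u ∈ E i := ((mem_LBorelSet_iff hM).1 h.2).mem_of_pos u hhu
  obtain ⟨s, hsu, hsE, hgs, g', hg'⟩ := exists_gen_reverse hM g huE hlt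
  obtain ⟨h', hh'⟩ := exists_gen_exchange h hsu hsE huE hhu
  refine isReducible_of_mrVarLT (.inl ?_) (mrVarLT_of_colexLTAt hgh)
    (mrVarLT_of_colexLTAt (hgh.of_exchange hsu huj hu hh'))
    (mrVarLT_of_colexLTAt (colexLTAt_of_exchange hsu hg')) hγg hγh
  rw [mul_comm (X (genVar i g))]
  exact .inl (.inr ⟨i, h, g, h', g', s, u, hsu, hsE, huE, hhu, hgs, hh', hg', rfl⟩)

lemma isReducible_of_tailDeg_lt_of_pos (hM : ∀ j, 0 < M i j → j ∈ E i) {g : Gen E M i}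
    (hγg : 0 < γ (genVar i g)) (hj : j ∈ E i) (hlt : tailDeg j g.1 < tailDeg j (M i))
    (hγj : 0 < γ (.inl j)) : IsReducible (mrOrder E M) (quadrics K E M) γ := by
  obtain ⟨s, hsj, hsE, -, g', hg'⟩ := exists_gen_reverse hM g hj hlt
  have hgg' := colexLTAt_of_exchange hsj hg'
  refine isReducible_of_mrVarLT (v := genVar i g) (a := .inl j) (b := .inl s)
    (c := genVar i g') (.inr ?_) trivial trivial
    (mrVarLT_of_colexLTAt hgg') hγg hγj
  rw [mul_comm (X (genVar i g))]
  exact .inl (.inl ⟨i, g', g, s, j, hsj, hsE, hj, Nat.zero_lt_of_lt hgg'.1, hg'.symm, rfl⟩)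

lemma isReducible_of_tailDeg_lt_of_lt (hM : ∀ j, 0 < M i j → j ∈ E i) {g : Gen E M i}
    (hγg : 0 < γ (genVar i g)) (hj : j ∈ E i) (hlt : tailDeg j g.1 < tailDeg j (M i))
    {i' : Fin r} (hM' : ∀ j, 0 < M i' j → j ∈ E i') (hii' : i < i')
    (hLfree : ∀ s < j, s ∈ E i → j ∈ E i' → s ∈ E i')
    {h : Gen E M i'} (hγh : 0 < γ (genVar i' h)) (hhj : 0 < h.1 j) :
    IsReducible (mrOrder E M) (quadrics K E M) γ := by
  obtain ⟨s, hsj, hsE, hgs, g', hg'⟩ := exists_gen_reverse hM g hj hlt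
  have hjE' : j ∈ E i' := ((mem_LBorelSet_iff hM').1 h.2).mem_of_pos j hhj
  have hsE' : s ∈ E i' := hLfree s hsj hsE hjE'
  obtain ⟨h', hh'⟩ := exists_gen_exchange h hsj hsE' hjE' hhj
  exact isReducible_of_mrVarLT (.inl (.inr ⟨i, i', hii', g, g', h, h', s, j, hsj, hsE, hj, hsE',
    hjE', hgs, hhj, hg', hh', rfl⟩)) (Or.inl hii')
    (mrVarLT_of_colexLTAt (colexLTAt_of_exchange hsj hg')) (Or.inl hii') hγg hγh

lemma isTight_gens (hM : ∀ j, 0 < M i j → j ∈ E i)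
    (hγ : ¬ IsReducible (mrOrder E M) (quadrics K E M) γ) :
    IsTight (fun u => tailDeg u (M i)) {g | g ∈ gens i γ} where
  tailDeg_le g hg u := by
    obtain ⟨g, rfl, -⟩ := exists_pos_of_mem_gens hg
    exact ((mem_LBorelSet_iff hM).1 g.2).tailDeg_le u
  apply_le g hg h hh j hgh := by
    obtain ⟨g, rfl, hγg⟩ := exists_pos_of_mem_gens hg
    obtain ⟨h, rfl, hγh⟩ := exists_pos_of_mem_gens hh
    by_contra! hlt
    exact hγ (isReducible_of_tailDeg_lt_of_colexLTAt hM hγg hγh hgh le_rfl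
      (Nat.zero_lt_of_lt hgh.1) (fun _ => hlt)
      (hgh.tailDeg_lt.trans_le (((mem_LBorelSet_iff hM).1 h.2).tailDeg_le j)))
  le_tailDeg g hg h hh j hgh u huj hhu := by
    obtain ⟨g, rfl, hγg⟩ := exists_pos_of_mem_gens hg
    obtain ⟨h, rfl, hγh⟩ := exists_pos_of_mem_gens hh
    by_contra! hlt
    exact hγ (isReducible_of_tailDeg_lt_of_colexLTAt hM hγg hγh hgh huj.le hhu
      (fun huj' => absurd huj' huj.ne) hlt)

lemma exists_gen_of_sum_gens_pos (hpos : 0 < (gens i γ).sum j) :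
    ∃ g : Gen E M i, 0 < γ (genVar i g) ∧ 0 < g.1 j := by
  rw [sum_gens, Finsupp.finsetSum_apply, sum_pos_iff] at hpos
  obtain ⟨g, -, hg⟩ := hpos
  exact ⟨g, Nat.pos_of_mul_pos_right hg, Nat.pos_of_mul_pos_left hg⟩

lemma pos_or_exists_gen_of_sum_gens_lt
    (hw : Finsupp.weight genWeight γ = Finsupp.weight genWeight γ')
    (hi : ∀ i' < i, (gens i' γ).sum j = (gens i' γ').sum j)
    (hlt : (gens i γ).sum j < (gens i γ').sum j) :
    0 < γ (.inl j) ∨ ∃ i' > i, ∃ h : Gen E M i', 0 < γ (genVar i' h) ∧ 0 < h.1 j := by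
  by_contra! h0
  have hlater (i') (hii' : i < i') : (gens i' γ).sum j = 0 := by
    by_contra hne
    obtain ⟨h, hγh, hhj⟩ := exists_gen_of_sum_gens_pos (Nat.pos_of_ne_zero hne)
    exact (h0.2 i' hii' h hγh).not_gt hhj
  have hsum : ∑ i', (gens i' γ).sum j < ∑ i', (gens i' γ').sum j := by
    refine sum_lt_sum (fun i' _ => ?_) ⟨i, mem_univ i, hlt⟩
    rcases lt_trichotomy i' i with hi'i | rfl | hii'
    · exact (hi i' hi'i).le
    · exact hlt.le
    · exact (hlater i' hii').trans_le (Nat.zero_le _)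
  have hwj := DFunLike.congr_fun hw (.inl j)
  rw [weight_genWeight_inl, weight_genWeight_inl] at hwj
  lia

/-- The ordering of the ideals with essential variable sets `E i` is `L`-free. -/
def IsLFree (E : Fin r → Set (Fin n)) : Prop :=
  ∀ (h j : Fin n) (u v : Fin r), h < j → u < v → h ∈ E u → j ∈ E u → j ∈ E v → h ∈ E v

/-- If the sum dropped at `x_j`, then `γ` would contain `x_j` or a later generator divisible by
`x_j`, so every generator of `γ` would have maximal degree in `x_j, …, x_n`; the sum would then
drop at a variable after `x_j` as well. -/
lemma sum_gens_apply_le (hsupp : ∀ i j, 0 < M i j → j ∈ E i) (hLfree : IsLFree E)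
    (hγ : ¬ IsReducible (mrOrder E M) (quadrics K E M) γ)
    (hw : Finsupp.weight genWeight γ = Finsupp.weight genWeight γ')
    (hi : ∀ i' < i, (gens i' γ).sum j = (gens i' γ').sum j)
    (hj : ∀ k > j, (gens i γ).sum k = (gens i γ').sum k) :
    (gens i γ').sum j ≤ (gens i γ).sum j := by
  by_contra! hlt
  obtain ⟨h, -, hhj⟩ := exists_gen_of_sum_gens_pos (Nat.zero_lt_of_lt hlt)
  have hjE : j ∈ E i := ((mem_LBorelSet_iff (hsupp i)).1 h.2).mem_of_pos j hhj
  have hmax (g) (hg : g ∈ gens i γ) : tailDeg j (M i) ≤ tailDeg j g := by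
    obtain ⟨g, rfl, hγg⟩ := exists_pos_of_mem_gens hg
    by_contra! hgj
    rcases pos_or_exists_gen_of_sum_gens_lt hw hi hlt with hγj | ⟨i', hii', h, hγh, hhj⟩
    · exact hγ (isReducible_of_tailDeg_lt_of_pos (hsupp i) hγg hjE hgj hγj)
    · exact hγ (isReducible_of_tailDeg_lt_of_lt (hsupp i) hγg hjE hgj (hsupp i') hii'
        (fun s hsj hs => hLfree s j i i' hsj hii' hs hjE) hγh hhj)
  have htail : tailDeg j (gens i γ).sum < tailDeg j (gens i γ').sum :=
    ColexLTAt.tailDeg_lt ⟨hlt, hj⟩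
  refine htail.not_ge ?_
  calc tailDeg j (gens i γ').sum
      ≤ (gens i γ').card • tailDeg j (M i) := ?_
    _ = (gens i γ).card • tailDeg j (M i) := by
      rw [← weight_genWeight_inr, ← weight_genWeight_inr, hw]
    _ ≤ tailDeg j (gens i γ).sum := ?_
  · rw [map_multiset_sum, ← Multiset.card_map (tailDeg j)]
    refine Multiset.sum_le_card_nsmul _ _ (Multiset.forall_mem_map_iff.2 fun g hg => ?_)
    obtain ⟨g, rfl, -⟩ := exists_pos_of_mem_gens hg
    exact ((mem_LBorelSet_iff (hsupp i)).1 g.2).tailDeg_le j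
  · rw [map_multiset_sum, ← Multiset.card_map (tailDeg j)]
    exact Multiset.card_nsmul_le_sum (Multiset.forall_mem_map_iff.2 hmax)

lemma sum_gens_eq (hsupp : ∀ i j, 0 < M i j → j ∈ E i) (hLfree : IsLFree E)
    (hγ : ¬ IsReducible (mrOrder E M) (quadrics K E M) γ)
    (hγ' : ¬ IsReducible (mrOrder E M) (quadrics K E M) γ')
    (hw : Finsupp.weight genWeight γ = Finsupp.weight genWeight γ') (i : Fin r) :
    (gens i γ).sum = (gens i γ').sum := by
  induction i using WellFoundedLT.induction with
  | _ i ihi =>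
    refine Finsupp.ext fun j => ?_
    induction j using WellFoundedGT.induction with
    | _ j ihj =>
      have hi i' (hi'i : i' < i) := DFunLike.congr_fun (ihi i' hi'i) j
      exact le_antisymm
        (sum_gens_apply_le hsupp hLfree hγ' hw.symm (fun i' hi'i => (hi i' hi'i).symm)
          fun k hk => (ihj k hk).symm)
        (sum_gens_apply_le hsupp hLfree hγ hw hi ihj)

theorem injOn_weight_genWeight (hsupp : ∀ i j, 0 < M i j → j ∈ E i) (hLfree : IsLFree E) :
    Set.InjOn (Finsupp.weight genWeight)
      {γ | ¬ IsReducible (mrOrder E M) (quadrics K E M) γ} := by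
  intro γ hγ γ' hγ' hw
  refine eq_of_gens_eq (fun i => ?_) hw
  refine (isTight_gens (hsupp i) hγ).eq_of_card_eq_of_sum_eq (isTight_gens (hsupp i) hγ') ?_
    (sum_gens_eq hsupp hLfree hγ hγ' hw i)
  rw [← weight_genWeight_inr, hw, weight_genWeight_inr]

end StandardMonomials

end MultiRees

open MvPolynomial MultiRees in
theorem multiRees_quadrics_groebner_general
    (K : Type*) [Field K] {n r : ℕ}
    (E : Fin r → Set (Fin n)) (M : Fin r → (Fin n →₀ ℕ))
    (hsupp : ∀ (i : Fin r) (j : Fin n), 0 < M i j → j ∈ E i)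
    (hLfree : ∀ (h j : Fin n) (u v : Fin r), h < j → u < v →
      h ∈ E u → j ∈ E u → j ∈ E v → h ∈ E v)
    (φ : MvPolynomial (Fin n ⊕ TVar n r E M) K →ₐ[K] MvPolynomial (Fin n ⊕ Fin r) K)
    (hφ : φ = MvPolynomial.aeval (Sum.elim
      (fun j : Fin n => MvPolynomial.X (Sum.inl j))
      (fun v : TVar n r E M => MvPolynomial.monomial
        (Finsupp.mapDomain Sum.inl v.2.1 + Finsupp.single (Sum.inr v.1) 1) (1 : K)))) :
    ∀ f : MvPolynomial (Fin n ⊕ TVar n r E M) K, φ f = 0 → f ≠ 0 →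
      ∃ lf ∈ f.support, (∀ a ∈ f.support, a ≠ lf → mrLexLT n r E M a lf) ∧
        ∃ b ∈ symQuadrics K n r E M ∪ prinQuadrics K n r E M ∪ biQuadrics K n r E M,
          ∃ lb ∈ b.support, (∀ c ∈ b.support, c ≠ lb → mrLexLT n r E M c lb) ∧
            lb ≤ lf := by
  rintro f hf hf0
  have hφ' : φ = aeval fun v => monomial (genWeight v) (1 : K) := by
    rw [hφ]
    exact congrArg aeval (funext (Sum.rec (fun _ => rfl) fun _ => rfl))
  obtain ⟨b, hb, hb0, hle⟩ := isReducible_degree_of_injOn (m := mrOrder E M)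
    (fun b hb => aeval_eq_zero_of_mem_quadrics hb) (injOn_weight_genWeight hsupp hLfree)
    (hφ' ▸ hf) hf0
  exact ⟨_, (mrOrder E M).degree_mem_support hf0, fun _ => mrLexLT_degree_of_mem_support, b, hb, _,
    (mrOrder E M).degree_mem_support hb0, fun _ => mrLexLT_degree_of_mem_support, hle⟩

/-- Theorem 6.8 (Gröbner basis): with the hypotheses of the `𝖫`-free setting, the
quadrics of symmetric and fiber type form a Gröbner basis of the defining ideal
`ker φ` of the multi-Rees algebra with respect to the lexicographic order above:
for every nonzero `f ∈ ker φ` the leading monomial of `f` is divisible by the leading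
monomial of one of these quadrics. -/
theorem multiRees_quadrics_groebner
    (K : Type*) [Field K] {n r : ℕ}
    (E : Fin r → Set (Fin n)) (M : Fin r → (Fin n →₀ ℕ))
    (hEss : ∀ i : Fin r, E i = {j : Fin n |
      (∃ g ∈ LBorelSet n (E i) (M i), 0 < g j) ∧
      ∃ g ∈ LBorelSet n (E i) (M i), ∃ g' ∈ LBorelSet n (E i) (M i), g j ≠ g' j})
    (hsupp : ∀ (i : Fin r) (j : Fin n), 0 < M i j → j ∈ E i)
    (hLfree : ∀ (h j : Fin n) (u v : Fin r), h < j → u < v →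
      h ∈ E u → j ∈ E u → j ∈ E v → h ∈ E v)
    (φ : MvPolynomial (Fin n ⊕ TVar n r E M) K →ₐ[K] MvPolynomial (Fin n ⊕ Fin r) K)
    (hφ : φ = MvPolynomial.aeval (Sum.elim
      (fun j : Fin n => MvPolynomial.X (Sum.inl j))
      (fun v : TVar n r E M => MvPolynomial.monomial
        (Finsupp.mapDomain Sum.inl v.2.1 + Finsupp.single (Sum.inr v.1) 1) (1 : K)))) :
    ∀ f : MvPolynomial (Fin n ⊕ TVar n r E M) K, φ f = 0 → f ≠ 0 →
      ∃ lf ∈ f.support, (∀ a ∈ f.support, a ≠ lf → mrLexLT n r E M a lf) ∧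
        ∃ b ∈ symQuadrics K n r E M ∪ prinQuadrics K n r E M ∪ biQuadrics K n r E M,
          ∃ lb ∈ b.support, (∀ c ∈ b.support, c ≠ lb → mrLexLT n r E M c lb) ∧
            lb ≤ lf :=
  multiRees_quadrics_groebner_general K E M hsupp hLfree φ hφ
end

section
/- Let I_1,…,I_r be principal Borel ideals in K[x_1,…,x_n], i.e., I_i is generated by Borel(M_i) for a monomial M_i. Then the multi-Rees algebra R[I_1t_1,…,I_rt_r] and the multi-fiber ring K[I_1t_1,…,I_rt_r] are normal domains: each is an integral domain that is integrally closed in its field of fractions. -/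
/-- A Borel move: `m'` is obtained from `m` by replacing one factor `x_j` by `x_i` with
`i < j`. -/
def BorelStep (n : ℕ) (m m' : Fin n →₀ ℕ) : Prop :=
  ∃ i j : Fin n, i < j ∧ 0 < m j ∧ m' + Finsupp.single j 1 = m + Finsupp.single i 1

/-- `Borel(M)`: all monomials obtainable from `M` by Borel moves (including `M`);
this is the minimal generating set of the principal Borel ideal `⟨Borel(M)⟩`. -/
def BorelSet (n : ℕ) (M : Fin n →₀ ℕ) : Set (Fin n →₀ ℕ) :=
  {m | Relation.ReflTransGen (BorelStep n) M m}

/-- The multi-Rees algebra `R[I_1t_1,…,I_rt_r]` of monomial ideals with minimal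
generating sets `G_1,…,G_r`: the `K`-subalgebra of `K[x_1,…,x_n,t_1,…,t_r]` generated
by `x_1,…,x_n` together with all `g·t_i`, `g ∈ G_i`. -/
noncomputable def multiRees (K : Type*) [Field K] (n r : ℕ)
    (G : Fin r → Set (Fin n →₀ ℕ)) :
    Subalgebra K (MvPolynomial (Fin n ⊕ Fin r) K) :=
  Algebra.adjoin K
    ((Set.range fun i : Fin n => (MvPolynomial.X (Sum.inl i) :
        MvPolynomial (Fin n ⊕ Fin r) K)) ∪
      {p | ∃ i : Fin r, ∃ g ∈ G i,
        p = MvPolynomial.monomial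
          (Finsupp.mapDomain Sum.inl g + Finsupp.single (Sum.inr i) 1) (1 : K)})

/-- The multi-fiber ring `K[I_1t_1,…,I_rt_r]`: the `K`-subalgebra of
`K[x_1,…,x_n,t_1,…,t_r]` generated by all `g·t_i`, `g ∈ G_i`. -/
noncomputable def multiFiber (K : Type*) [Field K] (n r : ℕ)
    (G : Fin r → Set (Fin n →₀ ℕ)) :
    Subalgebra K (MvPolynomial (Fin n ⊕ Fin r) K) :=
  Algebra.adjoin K
    {p | ∃ i : Fin r, ∃ g ∈ G i,
      p = MvPolynomial.monomial
        (Finsupp.mapDomain Sum.inl g + Finsupp.single (Sum.inr i) 1) (1 : K)}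

/-!
Twisting each monomial `x^s` into `x^s T^(l s)` sends a polynomial `f` to a Laurent polynomial in
`T`, which is a polynomial in `T` exactly when the support of `f` lies in the half-space `l ≥ 0`.
Since `S[T]` is integrally closed in `S[T, T⁻¹]` for reduced `S`, having support in a half-space
passes to integral elements, so a monomial algebra whose exponent monoid is cut out by half-spaces
is integrally closed in the polynomial ring, hence normal.

It remains to find such inequalities. A monomial `a` lies in `Borel(M)` if and only if it has the
degree of `M` and, for every `k`, at least as many factors among `x_1, …, x_k` as `M`. As these
conditions are additive in `M` and `Borel(M + N) = Borel(M) + Borel(N)`, the exponents `x^a t^c` of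
the two algebras are described by comparing `a` with `∑ i, c_i M_i` in the same way.
-/

section LaurentPolynomial

open Polynomial LaurentPolynomial

variable {R : Type*} [CommRing R] [IsReduced R]

-- Multiplying the roots of an equation for `f` by `X ^ (n + 1)` gives an equation for `p`, which at
-- `X = 0` says that a power of `p.eval 0` vanishes.
theorem X_dvd_of_isIntegral_of_toLaurent_eq {f : R[T;T⁻¹]} (hf : IsIntegral R[X] f) {p : R[X]}
    {n : ℕ} (hp : toLaurent p = f * T ↑(n + 1)) : X ∣ p := by
  obtain ⟨q, hq, hqf⟩ := hf
  have hroot : (q.scaleRoots (X ^ (n + 1))).eval p = 0 := by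
    apply toLaurent_injective
    rw [← eval₂_hom, map_zero, hp, mul_comm, ← toLaurent_X_pow]
    exact scaleRoots_eval₂_eq_zero _ hqf
  have hpow : p.eval 0 ^ q.natDegree = 0 := by
    nontriviality R
    have := congrArg (evalRingHom (0 : R)) hroot
    rw [← eval₂_hom, ← eval_map, map_scaleRoots _ _ _ (by simp [hq])] at this
    simpa [hq.natDegree_map, hq.map] using this
  rw [X_dvd_iff, coeff_zero_eq_eval_zero]
  exact eq_zero_of_pow_eq_zero hpow

theorem isIntegrallyClosedIn_laurentPolynomial : IsIntegrallyClosedIn R[X] R[T;T⁻¹] := by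
  refine isIntegrallyClosedIn_iff.2 ⟨toLaurent_injective, fun {f} hf ↦ ?_⟩
  obtain ⟨n, p, hp⟩ := exists_T_pow f
  induction n generalizing p with
  | zero => exact ⟨p, by simpa using hp⟩
  | succ n ih =>
    obtain ⟨q, rfl⟩ := X_dvd_of_isIntegral_of_toLaurent_eq hf hp
    refine ih q ((isUnit_T 1).mul_left_cancel ?_)
    rw [← toLaurent_X, ← map_mul, hp, toLaurent_X, Nat.cast_succ, T_add]
    ring

end LaurentPolynomial

section HalfSpace

open Polynomial LaurentPolynomial AddMonoidAlgebra

variable {R P : Type*} [CommRing R] [AddCommMonoid P]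

/-- The homomorphism `x^s ↦ x^s T^(l s)` attached to an additive functional `l`. It encodes the
half-space `l ≥ 0` as the condition of being a polynomial in `T`. -/
noncomputable def laurentTwist (l : P →+ ℤ) : R[P] →ₐ[R] R[P][T;T⁻¹] :=
  AddMonoidAlgebra.lift R R[P][T;T⁻¹] P
    { toFun s := LaurentPolynomial.C (of R P s) * T (l s.toAdd)
      map_one' := by rw [map_one, map_one, toAdd_one, map_zero, T_zero, mul_one]
      map_mul' s t := by rw [map_mul, map_mul, toAdd_mul, map_add, T_add]; ring }

theorem laurentTwist_single (l : P →+ ℤ) (s : P) (c : R) :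
    laurentTwist l (single s c) = LaurentPolynomial.C (single s c) * T (l s) := by
  simp only [laurentTwist, lift_single, MonoidHom.coe_mk, OneHom.coe_mk, of_apply, toAdd_ofAdd,
    ← smul_mul_assoc, ← LaurentPolynomial.single_eq_C, smul_single, smul_eq_mul, mul_one]

theorem coeff_coeff_laurentTwist (l : P →+ ℤ) (f : R[P]) (s : P) :
    ((laurentTwist l f).coeff (l s)).coeff s = f.coeff s := by
  classical
  induction f using AddMonoidAlgebra.induction_linear with
  | zero => simp
  | add f g hf hg => simp [hf, hg]
  | single t c =>
    rw [laurentTwist_single, ← single_eq_C_mul_T, coeff_single, Finsupp.single_apply]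
    obtain rfl | h := eq_or_ne t s
    · simp
    · split_ifs <;> simp [h]

theorem laurentTwist_mem_range_toLaurent_iff {l : P →+ ℤ} {f : R[P]} :
    laurentTwist l f ∈ (toLaurent (R := R[P])).range ↔ ∀ s ∈ f.coeff.support, 0 ≤ l s := by
  constructor
  · rintro ⟨p, hp⟩ s hs
    by_contra! hneg
    have hcoeff : (toLaurent p).coeff (l s) = 0 := by
      rw [coeff_toLaurent]
      refine Finsupp.mapDomain_of_notMem_range _ _ ?_
      rintro ⟨k, hk⟩
      exact hneg.not_ge (hk ▸ Int.natCast_nonneg k)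
    rw [Finsupp.mem_support_iff, ← coeff_coeff_laurentTwist l, ← hp, hcoeff] at hs
    exact hs rfl
  · intro h
    rw [← f.sum_coeff_single, Finsupp.sum, map_sum]
    refine sum_mem fun s hs ↦ ?_
    obtain ⟨k, hk⟩ := Int.eq_ofNat_of_zero_le (h s hs)
    exact ⟨.C (single s (f.coeff s)) * X ^ k,
      by rw [laurentTwist_single, hk, toLaurent_C_mul_X_pow]⟩

theorem nonneg_on_support_of_isIntegral [IsReduced R[P]] {A : Subalgebra R R[P]} {l : P →+ ℤ}
    (hA : ∀ f ∈ A, ∀ s ∈ f.coeff.support, 0 ≤ l s) {f : R[P]} (hf : IsIntegral A f) :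
    ∀ s ∈ f.coeff.support, 0 ≤ l s := by
  let e : R[P][X] ≃+* (toLaurent (R := R[P])).range :=
    .ofBijective _ ⟨fun _ _ h ↦ toLaurent_injective (congrArg Subtype.val h),
      RingHom.rangeRestrict_surjective _⟩
  let θ : A →+* (toLaurent (R := R[P])).range :=
    ((laurentTwist l).comp A.val).toRingHom.codRestrict _ fun a ↦
      laurentTwist_mem_range_toLaurent_iff.2 (hA a a.2)
  have hθ : IsIntegral R[P][X] (laurentTwist l f) :=
    hf.map_of_comp_eq ((e.symm : _ →+* R[P][X]).comp θ) (laurentTwist l).toRingHom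
      (RingHom.ext fun a ↦ congrArg Subtype.val (e.apply_symm_apply (θ a)))
  exact laurentTwist_mem_range_toLaurent_iff.1 <|
    (isIntegrallyClosedIn_iff.1 isIntegrallyClosedIn_laurentPolynomial).2 hθ

theorem adjoin_of'_eq_supported (G : Set P) :
    (Algebra.adjoin R (of' R P '' G)).toSubmodule = supported R R (AddSubmonoid.closure G) := by
  have himage (S : Set P) : of' R P '' S = of R P '' (Multiplicative.toAdd ⁻¹' S) := rfl
  have hclosure : (Submonoid.closure (of' R P '' G) : Set R[P]) =
      of' R P '' AddSubmonoid.closure G := by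
    rw [himage, ← MonoidHom.map_mclosure, ← AddSubmonoid.toSubmonoid_closure, Submonoid.coe_map,
      himage]
    rfl
  rw [Algebra.adjoin_eq_span, hclosure, supported_eq_span_single]
  rfl

theorem mem_adjoin_of'_iff {G : Set P} {f : R[P]} :
    f ∈ Algebra.adjoin R (of' R P '' G) ↔ ↑f.coeff.support ⊆ (AddSubmonoid.closure G : Set P) := by
  rw [← Subalgebra.mem_toSubmodule, adjoin_of'_eq_supported, mem_supported]

theorem isIntegrallyClosedIn_adjoin_of' [IsReduced R[P]] {G : Set P} {L : Set (P →+ ℤ)}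
    (h : ∀ s, s ∈ AddSubmonoid.closure G ↔ ∀ l ∈ L, 0 ≤ l s) :
    IsIntegrallyClosedIn (Algebra.adjoin R (of' R P '' G)) R[P] := by
  refine Subring.isIntegrallyClosedIn_iff.2 fun f hf ↦
    mem_adjoin_of'_iff.2 fun s hs ↦ (h s).2 fun l hl ↦ ?_
  have hA : ∀ a ∈ Algebra.adjoin R (of' R P '' G), ∀ t ∈ a.coeff.support, 0 ≤ l t :=
    fun a ha t ht ↦ (h t).1 (mem_adjoin_of'_iff.1 ha ht) l hl
  exact nonneg_on_support_of_isIntegral hA hf s hs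

theorem isIntegrallyClosed_adjoin_of' [IsDomain R[P]] [IsIntegrallyClosed R[P]] {G : Set P}
    {L : Set (P →+ ℤ)} (h : ∀ s, s ∈ AddSubmonoid.closure G ↔ ∀ l ∈ L, 0 ≤ l s) :
    IsIntegrallyClosed (Algebra.adjoin R (of' R P '' G)) :=
  have := isIntegrallyClosedIn_adjoin_of' (R := R) h
  .of_isIntegrallyClosed_of_isIntegrallyClosedIn _ R[P]

end HalfSpace

section HeadDegree

variable {n : ℕ}

/-- The number of factors of `x^a` among the first `k` variables (`x_0, …, x_{k-1}` in the indexing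
of `Fin n`), counted with multiplicity. For `k ≥ n` this is the total degree. Dominance of these
degrees describes `Borel(M)`. -/
noncomputable def headDegree (k : ℕ) : (Fin n →₀ ℕ) →+ ℕ :=
  ∑ i : Fin n with i.val < k, Finsupp.applyAddHom i

theorem headDegree_apply (k : ℕ) (a : Fin n →₀ ℕ) :
    headDegree k a = ∑ i : Fin n with i.val < k, a i := by
  simp [headDegree, AddMonoidHom.finsetSum_apply]

theorem headDegree_zero (a : Fin n →₀ ℕ) : headDegree 0 a = 0 := by
  simp [headDegree_apply]

theorem headDegree_single (k : ℕ) (i : Fin n) (m : ℕ) :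
    headDegree k (Finsupp.single i m) = if i.val < k then m else 0 := by
  simp [headDegree_apply, Finsupp.single_apply, Finset.sum_ite_eq]

theorem headDegree_succ (i : Fin n) (a : Fin n →₀ ℕ) :
    headDegree (i + 1) a = headDegree i a + a i := by
  have hinsert : ({j | j.val < i + 1} : Finset (Fin n)) =
      insert i ({j | j.val < i} : Finset (Fin n)) := by
    ext j
    simp [Fin.ext_iff, le_iff_eq_or_lt]
  rw [headDegree_apply, headDegree_apply, hinsert, Finset.sum_insert (by simp), add_comm]

theorem headDegree_le (k : ℕ) (a : Fin n →₀ ℕ) : headDegree k a ≤ headDegree n a := by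
  simp only [headDegree_apply, Fin.is_lt, Finset.filter_true]
  exact Finset.sum_le_sum_of_subset (Finset.filter_subset _ _)

theorem headDegree_eq_of_forall_eq_zero {k : ℕ} {a : Fin n →₀ ℕ}
    (ha : ∀ i : Fin n, k ≤ i → a i = 0) : headDegree k a = headDegree n a := by
  simp only [headDegree_apply, Fin.is_lt, Finset.filter_true]
  exact Finset.sum_subset (Finset.subset_univ _) fun i _ hi ↦ ha i (by simpa using hi)

theorem headDegree_of_le {k : ℕ} (hk : n ≤ k) (a : Fin n →₀ ℕ) : headDegree k a = headDegree n a :=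
  headDegree_eq_of_forall_eq_zero fun i hi ↦ absurd i.is_lt (hk.trans hi).not_gt

theorem eq_of_headDegree_eq {a b : Fin n →₀ ℕ} (h : ∀ k, headDegree k a = headDegree k b) :
    a = b := by
  ext i
  have := headDegree_succ i a
  rw [h, h, headDegree_succ] at this
  exact (add_left_cancel this).symm

end HeadDegree

section BorelSet

variable {n : ℕ} {M N a b c : Fin n →₀ ℕ}

theorem exists_add_single_eq {i j : Fin n} (hj : 0 < a j) :
    ∃ b, b + Finsupp.single j 1 = a + Finsupp.single i 1 := by
  refine ⟨a - Finsupp.single j 1 + Finsupp.single i 1, ?_⟩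
  rw [add_right_comm, Finsupp.sub_add_single_one_cancel hj.ne']

theorem BorelStep.headDegree_le (h : BorelStep n a b) (k : ℕ) :
    headDegree k a ≤ headDegree k b := by
  obtain ⟨i, j, hij, -, h⟩ := h
  have := congrArg (headDegree k) h
  simp only [map_add, headDegree_single] at this
  split_ifs at this <;> omega

theorem BorelStep.headDegree_eq (h : BorelStep n a b) : headDegree n b = headDegree n a := by
  obtain ⟨i, j, -, -, h⟩ := h
  simpa [headDegree_single] using congrArg (headDegree n) h

theorem exists_headDegree_lt_and_succ_eq (hdeg : headDegree n a = headDegree n M)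
    (hle : ∀ k, headDegree k M ≤ headDegree k a) (hne : M ≠ a) :
    ∃ k, headDegree k M < headDegree k a ∧ headDegree (k + 1) M = headDegree (k + 1) a := by
  by_contra! h
  obtain ⟨k, hk⟩ : ∃ k, headDegree k M < headDegree k a := by
    by_contra! hge
    exact hne (eq_of_headDegree_eq fun k ↦ (hle k).antisymm (hge k))
  have hlt : headDegree (n + k) M < headDegree (n + k) a :=
    Nat.le_induction hk (fun l _ hl ↦ (hle _).lt_of_ne (h l hl)) (n + k) (Nat.le_add_left k n)
  rw [headDegree_of_le (Nat.le_add_right n k), headDegree_of_le (Nat.le_add_right n k)] at hlt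
  exact hlt.ne' hdeg

-- The move `x_k ↦ x_{k-1}` raises the `k`-th head degree by one and preserves all others.
theorem exists_borelStep_headDegree_le (hdeg : headDegree n a = headDegree n M)
    (hle : ∀ k, headDegree k M ≤ headDegree k a) (hne : M ≠ a) :
    ∃ M', BorelStep n M M' ∧ (∀ k, headDegree k M' ≤ headDegree k a) ∧
      ∃ k < n, headDegree k M < headDegree k M' := by
  obtain ⟨k, hk, hsucc⟩ := exists_headDegree_lt_and_succ_eq hdeg hle hne
  obtain ⟨i, rfl⟩ : ∃ i, k = i + 1 :=
    Nat.exists_eq_succ_of_ne_zero (by rintro rfl; simp [headDegree_zero] at hk)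
  have hin : i + 1 < n := by
    by_contra! hni
    rw [headDegree_of_le hni, headDegree_of_le hni] at hk
    exact hk.ne' hdeg
  let j : Fin n := ⟨i + 1, hin⟩
  have hj : 0 < M j := by
    have hM := headDegree_succ j M
    have ha := headDegree_succ j a
    simp only [j] at hM ha ⊢
    omega
  obtain ⟨M', hM'⟩ := exists_add_single_eq (i := ⟨i, by omega⟩) hj
  have hhead (l : ℕ) : headDegree l M' = headDegree l M + if l = i + 1 then 1 else 0 := by
    have := congrArg (headDegree l) hM'
    simp only [map_add, headDegree_single, j] at this
    split_ifs at this ⊢ <;> omega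
  refine ⟨M', ⟨_, j, Nat.lt_succ_self i, hj, hM'⟩, fun l ↦ ?_, i + 1, hin, by simp [hhead]⟩
  rw [hhead]
  split_ifs with hl
  · exact hl ▸ hk
  · exact hle l

theorem mem_borelSet_iff : a ∈ BorelSet n M ↔
    headDegree n a = headDegree n M ∧ ∀ k, headDegree k M ≤ headDegree k a := by
  constructor
  · intro h
    induction h with
    | refl => exact ⟨rfl, fun _ ↦ le_rfl⟩
    | tail _ hstep ih =>
      exact ⟨hstep.headDegree_eq.trans ih.1, fun k ↦ (ih.2 k).trans (hstep.headDegree_le k)⟩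
  · rintro ⟨hdeg, hle⟩
    induction hd : ∑ k ∈ Finset.range n, (headDegree k a - headDegree k M)
      using Nat.strong_induction_on generalizing M with
    | _ d ih =>
      obtain rfl | hne := eq_or_ne M a
      · exact .refl
      obtain ⟨M', hstep, hle', k, hkn, hk⟩ := exists_borelStep_headDegree_le hdeg hle hne
      refine .head hstep (ih _ ?_ (hdeg.trans hstep.headDegree_eq.symm) hle' rfl)
      rw [← hd]
      exact Finset.sum_lt_sum (fun l _ ↦ Nat.sub_le_sub_left (hstep.headDegree_le l) _)
        ⟨k, Finset.mem_range.2 hkn, Nat.sub_lt_sub_left (hk.trans_le (hle' k)) hk⟩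

theorem BorelStep.exists_eq_add (h : BorelStep n (b + c) a) :
    ∃ b' ∈ BorelSet n b, ∃ c' ∈ BorelSet n c, b' + c' = a := by
  obtain ⟨i, j, hij, hj, h⟩ := h
  obtain hj | hj : 0 < b j ∨ 0 < c j := by simpa [Nat.pos_iff_ne_zero, imp_iff_or_not] using hj
  · obtain ⟨b', hb'⟩ := exists_add_single_eq (i := i) hj
    refine ⟨b', .single ⟨i, j, hij, hj, hb'⟩, c, .refl,
      add_right_cancel (b := Finsupp.single j 1) ?_⟩
    rw [h, add_right_comm, hb', add_right_comm]
  · obtain ⟨c', hc'⟩ := exists_add_single_eq (i := i) hj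
    refine ⟨b, .refl, c', .single ⟨i, j, hij, hj, hc'⟩,
      add_right_cancel (b := Finsupp.single j 1) ?_⟩
    rw [h, add_assoc, hc', add_assoc]

theorem borelSet_zero : BorelSet n 0 = {0} := by
  ext a
  refine ⟨fun h ↦ ?_, fun h ↦ h ▸ .refl⟩
  obtain rfl | ⟨_, ⟨_, _, _, hpos, _⟩, _⟩ := h.cases_head
  · rfl
  · exact absurd hpos (lt_irrefl 0)

open Pointwise in
theorem borelSet_add (M N : Fin n →₀ ℕ) : BorelSet n (M + N) = BorelSet n M + BorelSet n N := by
  ext a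
  constructor
  · intro h
    induction h with
    | refl => exact ⟨M, .refl, N, .refl, rfl⟩
    | tail _ hstep ih =>
      obtain ⟨b, hb, c, hc, rfl⟩ := ih
      obtain ⟨b', hb', c', hc', rfl⟩ := hstep.exists_eq_add
      exact ⟨b', hb.trans hb', c', hc.trans hc', rfl⟩
  · rintro ⟨b, hb, c, hc, rfl⟩
    obtain ⟨hbdeg, hb⟩ := mem_borelSet_iff.1 hb
    obtain ⟨hcdeg, hc⟩ := mem_borelSet_iff.1 hc
    simp only [mem_borelSet_iff, map_add]
    exact ⟨congrArg₂ _ hbdeg hcdeg, fun k ↦ add_le_add (hb k) (hc k)⟩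

-- Only the head degrees that already equal the total degree drop when the last variable of `a` is
-- removed.
theorem exists_add_single_of_headDegree_lt (hle : ∀ k, headDegree k N ≤ headDegree k a)
    (hlt : headDegree n N < headDegree n a) :
    ∃ a' j, a = a' + Finsupp.single j 1 ∧ ∀ k, headDegree k N ≤ headDegree k a' := by
  have ha : a.support.Nonempty := by
    rw [Finsupp.support_nonempty_iff]
    rintro rfl
    simp at hlt
  let j := a.support.max' ha
  have hsub : a - Finsupp.single j 1 + Finsupp.single j 1 = a :=
    Finsupp.sub_add_single_one_cancel (Finsupp.mem_support_iff.1 (a.support.max'_mem ha))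
  refine ⟨a - Finsupp.single j 1, j, hsub.symm, fun k ↦ ?_⟩
  have hhead := congrArg (headDegree k) hsub
  rw [map_add, headDegree_single] at hhead
  split_ifs at hhead with hjk
  · have htop : headDegree k a = headDegree n a := headDegree_eq_of_forall_eq_zero fun i hki ↦ by
      by_contra hi
      exact (a.support.le_max' i (Finsupp.mem_support_iff.2 hi)).not_gt (hjk.trans_le hki)
    have := headDegree_le k N
    omega
  · exact (hle k).trans_eq hhead.symm

theorem exists_mem_borelSet_le (hle : ∀ k, headDegree k N ≤ headDegree k a) :
    ∃ b ∈ BorelSet n N, b ≤ a := by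
  obtain ⟨d, hd⟩ := Nat.exists_eq_add_of_le (hle n)
  induction d generalizing a with
  | zero => exact ⟨a, mem_borelSet_iff.2 ⟨hd, hle⟩, le_rfl⟩
  | succ d ih =>
    obtain ⟨a', j, rfl, hle'⟩ := exists_add_single_of_headDegree_lt hle (by omega)
    obtain ⟨b, hb, hba⟩ := ih hle' (by simpa [headDegree_single, ← add_assoc] using hd)
    exact ⟨b, hb, hba.trans le_self_add⟩

end BorelSet

section ExponentMonoid

open Finsupp

theorem closure_range_single_one (ι : Type*) :
    AddSubmonoid.closure (Set.range fun i : ι ↦ single i (1 : ℕ)) = ⊤ := by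
  rw [eq_top_iff, ← add_closure_setOfPred_eq_single, AddSubmonoid.closure_le]
  rintro _ ⟨i, m, rfl⟩
  rw [← smul_single_one]
  exact nsmul_mem (AddSubmonoid.subset_closure (Set.mem_range_self i)) m

variable {n : ℕ} {ι : Type*}

/-- The pair `(a, c)` of exponents of the monomial `x^a t^c`, in which the exponents of the algebras
below are described. -/
noncomputable abbrev xtExponent : (Fin n ⊕ ι →₀ ℕ) ≃+ (Fin n →₀ ℕ) × (ι →₀ ℕ) :=
  sumFinsuppAddEquivProdFinsupp

theorem xtExponent_symm_apply (a : Fin n →₀ ℕ) (c : ι →₀ ℕ) :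
    xtExponent.symm (a, c) = mapDomain Sum.inl a + mapDomain Sum.inr c := by
  ext (i | i)
  · simp [mapDomain_apply Sum.inl_injective, mapDomain_of_notMem_range]
  · simp [mapDomain_apply Sum.inr_injective, mapDomain_of_notMem_range]

/-- The exponents of the generators `g t_i`, `g ∈ G_i`, of the multi-fiber ring. -/
def fiberExponents (G : ι → Set (Fin n →₀ ℕ)) : Set (Fin n ⊕ ι →₀ ℕ) :=
  {s | ∃ i, ∃ g ∈ G i, s = xtExponent.symm (g, single i 1)}

/-- The exponents of the generators `x_j` and `g t_i`, `g ∈ G_i`, of the multi-Rees algebra. -/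
def reesExponents (G : ι → Set (Fin n →₀ ℕ)) : Set (Fin n ⊕ ι →₀ ℕ) :=
  (Set.range fun j ↦ xtExponent.symm (single j 1, 0)) ∪ fiberExponents G

variable {M : ι → Fin n →₀ ℕ} {s : Fin n ⊕ ι →₀ ℕ}

theorem xtExponent_symm_mem_closure_fiberExponents {a : Fin n →₀ ℕ} {c : ι →₀ ℕ}
    (ha : a ∈ BorelSet n (linearCombination ℕ M c)) :
    xtExponent.symm (a, c) ∈ AddSubmonoid.closure (fiberExponents fun i ↦ BorelSet n (M i)) := by
  have hc := closure_range_single_one ι ▸ AddSubmonoid.mem_top c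
  induction hc using AddSubmonoid.closure_induction generalizing a with
  | mem c hc =>
    obtain ⟨i, rfl⟩ := hc
    exact AddSubmonoid.subset_closure ⟨i, a, by simpa using ha, rfl⟩
  | zero =>
    rw [map_zero, borelSet_zero, Set.mem_singleton_iff] at ha
    rw [ha, Prod.mk_zero_zero, map_zero]
    exact zero_mem _
  | add c d _ _ hc hd =>
    rw [map_add, borelSet_add] at ha
    obtain ⟨a, ha, b, hb, rfl⟩ := ha
    rw [← Prod.mk_add_mk, map_add]
    exact add_mem (hc ha) (hd hb)

theorem mem_closure_fiberExponents_iff :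
    s ∈ AddSubmonoid.closure (fiberExponents fun i ↦ BorelSet n (M i)) ↔
      (xtExponent s).1 ∈ BorelSet n (linearCombination ℕ M (xtExponent s).2) := by
  constructor
  · intro h
    induction h using AddSubmonoid.closure_induction with
    | mem s hs =>
      obtain ⟨i, g, hg, rfl⟩ := hs
      simpa using hg
    | zero => simp [borelSet_zero]
    | add s t _ _ hs ht =>
      rw [map_add, Prod.fst_add, Prod.snd_add, map_add, borelSet_add]
      exact Set.add_mem_add hs ht
  · intro h
    simpa using xtExponent_symm_mem_closure_fiberExponents h

theorem xtExponent_symm_mem_closure_reesExponents (G : ι → Set (Fin n →₀ ℕ)) (a : Fin n →₀ ℕ) :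
    xtExponent.symm (a, 0) ∈ AddSubmonoid.closure (reesExponents G) := by
  have ha := closure_range_single_one (Fin n) ▸ AddSubmonoid.mem_top a
  induction ha using AddSubmonoid.closure_induction with
  | mem a ha =>
    obtain ⟨j, rfl⟩ := ha
    exact AddSubmonoid.subset_closure (.inl ⟨j, rfl⟩)
  | zero =>
    rw [Prod.mk_zero_zero, map_zero]
    exact zero_mem _
  | add a b _ _ ha hb =>
    rw [← add_zero (0 : ι →₀ ℕ), ← Prod.mk_add_mk, map_add]
    exact add_mem ha hb

theorem mem_closure_reesExponents_iff :
    s ∈ AddSubmonoid.closure (reesExponents fun i ↦ BorelSet n (M i)) ↔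
      ∀ k, headDegree k (linearCombination ℕ M (xtExponent s).2) ≤
        headDegree k (xtExponent s).1 := by
  constructor
  · intro h
    induction h using AddSubmonoid.closure_induction with
    | mem s hs =>
      obtain ⟨j, rfl⟩ | hs := hs
      · simp
      · exact (mem_borelSet_iff.1 (mem_closure_fiberExponents_iff.1
          (AddSubmonoid.subset_closure hs))).2
    | zero => simp
    | add s t _ _ hs ht =>
      simp only [map_add, Prod.fst_add, Prod.snd_add]
      exact fun k ↦ add_le_add (hs k) (ht k)
  · intro h
    obtain ⟨b, hb, hba⟩ := exists_mem_borelSet_le h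
    have hs : s = xtExponent.symm ((xtExponent s).1 - b, 0) +
        xtExponent.symm (b, (xtExponent s).2) := by
      rw [← map_add, Prod.mk_add_mk, tsub_add_cancel_of_le hba, zero_add, Prod.mk.eta,
        AddEquiv.symm_apply_apply]
    rw [hs]
    exact add_mem (xtExponent_symm_mem_closure_reesExponents _ _)
      (AddSubmonoid.closure_mono Set.subset_union_right
        (xtExponent_symm_mem_closure_fiberExponents hb))

/-- The excess of the `k`-th head degree of `a` over that of `∑ i, c_i M_i` on the exponent of
`x^a t^c`. These functionals define the half-spaces cutting out the exponents of both algebras. -/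
noncomputable def headExcess (M : ι → Fin n →₀ ℕ) (k : ℕ) : (Fin n ⊕ ι →₀ ℕ) →+ ℤ :=
  let toInt := (Nat.castAddMonoidHom ℤ).comp (headDegree k)
  (toInt.comp (AddMonoidHom.fst _ _) -
    toInt.comp ((linearCombination ℕ M).toAddMonoidHom.comp (AddMonoidHom.snd _ _))).comp
    xtExponent.toAddMonoidHom

theorem headExcess_apply (M : ι → Fin n →₀ ℕ) (k : ℕ) (s : Fin n ⊕ ι →₀ ℕ) :
    headExcess M k s = headDegree k (xtExponent s).1 -
      headDegree k (linearCombination ℕ M (xtExponent s).2) :=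
  rfl

theorem headExcess_nonneg_iff {k : ℕ} : 0 ≤ headExcess M k s ↔
    headDegree k (linearCombination ℕ M (xtExponent s).2) ≤ headDegree k (xtExponent s).1 := by
  rw [headExcess_apply, sub_nonneg, Nat.cast_le]

theorem mem_closure_reesExponents_iff_headExcess_nonneg :
    s ∈ AddSubmonoid.closure (reesExponents fun i ↦ BorelSet n (M i)) ↔
      ∀ l ∈ Set.range (headExcess M), 0 ≤ l s := by
  simp only [mem_closure_reesExponents_iff, Set.forall_mem_range, headExcess_nonneg_iff]

theorem mem_closure_fiberExponents_iff_headExcess_nonneg :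
    s ∈ AddSubmonoid.closure (fiberExponents fun i ↦ BorelSet n (M i)) ↔
      ∀ l ∈ insert (-headExcess M n) (Set.range (headExcess M)), 0 ≤ l s := by
  simp only [mem_closure_fiberExponents_iff, mem_borelSet_iff, Set.forall_mem_insert,
    Set.forall_mem_range, headExcess_nonneg_iff, AddMonoidHom.neg_apply]
  refine and_congr_left fun h ↦ ?_
  rw [headExcess_apply, neg_sub, sub_nonneg, Nat.cast_le]
  exact ⟨fun h' ↦ h'.le, fun h' ↦ h'.antisymm (h n)⟩

end ExponentMonoid

section MultiRees

open AddMonoidAlgebra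

variable (K : Type*) [Field K] {n r : ℕ} (G : Fin r → Set (Fin n →₀ ℕ))

theorem image_of'_fiberExponents : of' K _ '' fiberExponents G =
    {p | ∃ i : Fin r, ∃ g ∈ G i, p = MvPolynomial.monomial
      (Finsupp.mapDomain Sum.inl g + Finsupp.single (Sum.inr i) 1) (1 : K)} := by
  ext p
  constructor
  · rintro ⟨_, ⟨i, g, hg, rfl⟩, rfl⟩
    exact ⟨i, g, hg, by rw [xtExponent_symm_apply, Finsupp.mapDomain_single]; rfl⟩
  · rintro ⟨i, g, hg, rfl⟩
    exact ⟨_, ⟨i, g, hg, rfl⟩, by rw [xtExponent_symm_apply, Finsupp.mapDomain_single]; rfl⟩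

theorem multiFiber_eq_adjoin :
    multiFiber K n r G = Algebra.adjoin K (of' K _ '' fiberExponents G) := by
  rw [multiFiber, image_of'_fiberExponents]

theorem multiRees_eq_adjoin :
    multiRees K n r G = Algebra.adjoin K (of' K _ '' reesExponents G) := by
  rw [multiRees, reesExponents, Set.image_union, image_of'_fiberExponents, ← Set.range_comp]
  congr! 3
  funext j
  rw [Function.comp_apply, xtExponent_symm_apply, Finsupp.mapDomain_single,
    Finsupp.mapDomain_zero, add_zero]
  rfl

end MultiRees

/-- Corollary 6.11, normality part: for any collection of principal Borel ideals
`I_i = ⟨Borel(M_i)⟩`, the multi-Rees algebra `R[I_1t_1,…,I_rt_r]` and the multi-fiber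
ring `K[I_1t_1,…,I_rt_r]` are normal domains: integral domains integrally closed in
their fields of fractions. -/
theorem multiRees_principal_borel_normal
    (K : Type*) [Field K] {n r : ℕ} (M : Fin r → (Fin n →₀ ℕ)) :
    (IsDomain (multiRees K n r fun i => BorelSet n (M i)) ∧
      IsIntegrallyClosed (multiRees K n r fun i => BorelSet n (M i))) ∧
    (IsDomain (multiFiber K n r fun i => BorelSet n (M i)) ∧
      IsIntegrallyClosed (multiFiber K n r fun i => BorelSet n (M i))) := by
  refine ⟨⟨inferInstance, ?_⟩, inferInstance, ?_⟩
  · rw [multiRees_eq_adjoin]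
    exact isIntegrallyClosed_adjoin_of' fun _ ↦ mem_closure_reesExponents_iff_headExcess_nonneg
  · rw [multiFiber_eq_adjoin]
    exact isIntegrallyClosed_adjoin_of' fun _ ↦ mem_closure_fiberExponents_iff_headExcess_nonneg
end
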